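/- arXiv:0910.0237 — 2 statements merged into one kernel-verified Lean document; each statement's English description precedes it below -/
import Mathlib

section
/- If (Y,f) is a transitive finitely presented system, then among all pairs ((X,g), α) where (X,g) is a transitive Smale space and α : X → Y is a u-resolving factor map, there is a minimal one (Y₊, π₊): for every such (X, α) there exists a u-resolving factor map β : X → Y₊ with α = π₊ ∘ β. -/
open Filter Topology Set

/-- `f` is expansive with expansive constant `c`. -/
def Expansive {X : Type*} [MetricSpace X] (f : Equiv.Perm X) (c : ℝ) : Prop :=
  ∀ p q : X, p ≠ q → ∃ n : ℤ, c < dist ((f ^ n) p) ((f ^ n) q)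

/-- The ε-stable set of `x`. -/
def Ws {X : Type*} [MetricSpace X] (f : Equiv.Perm X) (ε : ℝ) (x : X) : Set X :=
  {y | ∀ n : ℕ, dist ((f ^ (n : ℤ)) x) ((f ^ (n : ℤ)) y) < ε}

/-- The ε-unstable set of `x`. -/
def Wu {X : Type*} [MetricSpace X] (f : Equiv.Perm X) (ε : ℝ) (x : X) : Set X :=
  {y | ∀ n : ℕ, dist ((f ^ (-(n : ℤ))) x) ((f ^ (-(n : ℤ))) y) < ε}

/-- The stable set of `x`. -/
def stableSet {X : Type*} [MetricSpace X] (f : Equiv.Perm X) (x : X) : Set X :=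
  {y | Filter.Tendsto (fun n : ℕ => dist ((f ^ (n : ℤ)) x) ((f ^ (n : ℤ)) y))
    Filter.atTop (nhds 0)}

/-- The unstable set of `x`. -/
def unstableSet {X : Type*} [MetricSpace X] (f : Equiv.Perm X) (x : X) : Set X :=
  {y | Filter.Tendsto (fun n : ℕ => dist ((f ^ (-(n : ℤ))) x) ((f ^ (-(n : ℤ))) y))
    Filter.atTop (nhds 0)}

/-- Canonical coordinates: for all sufficiently small ε > 0 there is δ > 0 such that
points at distance < δ have a unique bracket `[x,y] = W^s_ε(x) ∩ W^u_ε(y)`. -/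
def CanonicalCoords {X : Type*} [MetricSpace X] (f : Equiv.Perm X) : Prop :=
  ∃ ε₀ > 0, ∀ ε : ℝ, 0 < ε → ε ≤ ε₀ → ∃ δ > 0, ∀ x y : X, dist x y < δ →
    ∃! z, z ∈ Ws f ε x ∩ Wu f ε y

/-- A Smale space: an expansive homeomorphism with canonical coordinates. -/
def IsSmale {X : Type*} [MetricSpace X] (f : Equiv.Perm X) : Prop :=
  Continuous (⇑f) ∧ Continuous (⇑f.symm) ∧ (∃ c > 0, Expansive f c) ∧ CanonicalCoords f

/-- Topological transitivity. -/
def TopTransitive {X : Type*} [MetricSpace X] (f : Equiv.Perm X) : Prop :=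
  ∀ U V : Set X, IsOpen U → IsOpen V → U.Nonempty → V.Nonempty →
    ∃ n : ℕ, ((f ^ (n : ℤ)) ⁻¹' U ∩ V).Nonempty

/-- A periodic point of `f`. -/
def IsPeriodicPoint {X : Type*} [MetricSpace X] (f : Equiv.Perm X) (p : X) : Prop :=
  ∃ N : ℕ, 0 < N ∧ (f ^ (N : ℤ)) p = p

/-- A factor map (surjective continuous semiconjugacy). -/
def IsFactorMap {X Y : Type*} [MetricSpace X] [MetricSpace Y]
    (F : Equiv.Perm X) (f : Equiv.Perm Y) (π : X → Y) : Prop :=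
  Continuous π ∧ Function.Surjective π ∧ ∀ x, π (F x) = f (π x)

/-- A map is u-resolving if it is injective on unstable sets. -/
def UResolving {X Y : Type*} [MetricSpace X] (F : Equiv.Perm X) (π : X → Y) : Prop :=
  ∀ x : X, Set.InjOn π (unstableSet F x)

/-- A map is s-resolving if it is injective on stable sets. -/
def SResolving {X Y : Type*} [MetricSpace X] (F : Equiv.Perm X) (π : X → Y) : Prop :=
  ∀ x : X, Set.InjOn π (stableSet F x)

/-- The shift map on bi-infinite sequences. -/
def shiftE (A : Type*) : Equiv.Perm (ℤ → A) where
  toFun x i := x (i + 1)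
  invFun x i := x (i - 1)
  left_inv x := funext fun i => congrArg x (by ring)
  right_inv x := funext fun i => congrArg x (by ring)

/-- The word `w` occurs in the sequence `x`. -/
def OccursIn {A : Type*} {k : ℕ} (w : Fin k → A) (x : ℤ → A) : Prop :=
  ∃ i : ℤ, ∀ j : Fin k, x (i + (j : ℤ)) = w j

/-- A subshift of finite type: the sequences avoiding a finite set of forbidden words. -/
def IsSFT {A : Type*} (S : Set (ℤ → A)) : Prop :=
  ∃ Fw : Set ((k : ℕ) × (Fin k → A)), Fw.Finite ∧
    S = {x | ∀ w ∈ Fw, ¬ OccursIn w.2 x}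

/-- A one-step SFT (vertex shift) with transition rule `T`. -/
def IsOneStepSFTFor {A : Type*} (T : A → A → Prop) (S : Set (ℤ → A)) : Prop :=
  S = {x | ∀ i : ℤ, T (x i) (x (i + 1))}

/-- `S` is invariant under the shift and its inverse. -/
def ShiftInvariant {A : Type*} (S : Set (ℤ → A)) : Prop :=
  (∀ x ∈ S, shiftE A x ∈ S) ∧ (∀ x ∈ S, (shiftE A).symm x ∈ S)

/-- A factor map from the subshift `(S, σ)` onto the system `(Y, f)`. -/
def IsSubshiftFactorMap {A Y : Type*} [TopologicalSpace A] [MetricSpace Y]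
    (S : Set (ℤ → A)) (f : Equiv.Perm Y) (φ : (ℤ → A) → Y) : Prop :=
  ContinuousOn φ S ∧ φ '' S = Set.univ ∧ ∀ x ∈ S, φ (shiftE A x) = f (φ x)

/-- Topological transitivity of the shift restricted to `S`. -/
def SubshiftTransitive {A : Type*} [TopologicalSpace A] (S : Set (ℤ → A)) : Prop :=
  ∀ U V : Set (ℤ → A), IsOpen U → IsOpen V → (U ∩ S).Nonempty → (V ∩ S).Nonempty →
    ∃ n : ℕ, (((shiftE A) ^ (n : ℤ)) ⁻¹' U ∩ V ∩ S).Nonempty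

/-- The stable set of `t` in the subshift `S`: points eventually agreeing with `t`. -/
def shiftStable {A : Type*} (S : Set (ℤ → A)) (t : ℤ → A) : Set (ℤ → A) :=
  {t' ∈ S | ∃ N : ℤ, ∀ i ≥ N, t' i = t i}

/-- A finitely presented system: an expansive system that is a factor of an SFT. -/
def FinitelyPresented {Y : Type*} [MetricSpace Y] (f : Equiv.Perm Y) : Prop :=
  Continuous (⇑f) ∧ Continuous (⇑f.symm) ∧ (∃ c > 0, Expansive f c) ∧
  ∃ (N : ℕ) (S : Set (ℤ → Fin N)), IsSFT S ∧ ShiftInvariant S ∧ S.Nonempty ∧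
    ∃ φ : (ℤ → Fin N) → Y, IsSubshiftFactorMap S f φ

/-! ### Basic facts on expansive homeomorphisms -/

namespace FPS

lemma zadd {X : Type*} (f : Equiv.Perm X) (m n : ℤ) (x : X) :
    (f ^ (m + n)) x = (f ^ m) ((f ^ n) x) := by
  rw [zpow_add, Equiv.Perm.mul_apply]

lemma zinv {X : Type*} (f : Equiv.Perm X) (m : ℤ) (x : X) :
    (f ^ m) ((f ^ (-m)) x) = x := by
  rw [← zadd]; simp

lemma zinv' {X : Type*} (f : Equiv.Perm X) (m : ℤ) (x : X) :
    (f ^ (-m)) ((f ^ m) x) = x := by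
  rw [← zadd]; simp

lemma cont_zpow {X : Type*} [TopologicalSpace X] {f : Equiv.Perm X} (hf : Continuous f)
    (hf' : Continuous f.symm) (n : ℤ) : Continuous (f ^ n : Equiv.Perm X) := by
  have h1 : ∀ (g : Equiv.Perm X), Continuous g → ∀ k : ℕ, Continuous (g ^ k : Equiv.Perm X) := by
    intro g hg k
    rw [Equiv.Perm.coe_pow]
    exact hg.iterate k
  cases n with
  | ofNat k => simpa using h1 f hf k
  | negSucc k =>
    rw [zpow_negSucc, ← inv_pow]
    exact h1 f⁻¹ hf' (k + 1)

lemma semiconj_zpow {X Y : Type*} {F : Equiv.Perm X} {f : Equiv.Perm Y} {α : X → Y}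
    (h : ∀ x, α (F x) = f (α x)) (n : ℤ) (x : X) : α ((F ^ n) x) = (f ^ n) (α x) := by
  have h' : ∀ x, α (F⁻¹ x) = f⁻¹ (α x) := by
    intro x
    rw [Equiv.Perm.eq_inv_iff_eq, ← h]
    simp
  induction n using Int.induction_on generalizing x with
  | zero => simp
  | succ k ih => rw [zpow_add_one, zpow_add_one, Equiv.Perm.mul_apply, Equiv.Perm.mul_apply, ih, h]
  | pred k ih => rw [zpow_sub_one, zpow_sub_one, Equiv.Perm.mul_apply, Equiv.Perm.mul_apply, ih, h']

lemma unif_mod {X : Type*} [MetricSpace X] [CompactSpace X] {f : Equiv.Perm X}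
    (hf : Continuous f) (hf' : Continuous f.symm) (M : ℕ) {ε : ℝ} (hε : 0 < ε) :
    ∃ δ > 0, ∀ p q : X, dist p q < δ → ∀ j : ℤ, |j| ≤ M → dist ((f ^ j) p) ((f ^ j) q) < ε := by
  have h : ∀ᶠ pq in uniformity X, ∀ j ∈ Finset.Icc (-(M : ℤ)) M,
      dist ((f ^ j) pq.1) ((f ^ j) pq.2) < ε := by
    rw [Filter.eventually_all_finset]
    intro j _
    have := CompactSpace.uniformContinuous_of_continuous (cont_zpow hf hf' j)
    exact this (Metric.dist_mem_uniformity hε)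
  obtain ⟨δ, hδ, H⟩ := Metric.mem_uniformity_dist.1 h
  refine ⟨δ, hδ, fun p q hpq j hj => H hpq j ?_⟩
  rw [Finset.mem_Icc]
  exact abs_le.1 hj

lemma unif_exp {X : Type*} [MetricSpace X] [CompactSpace X] {f : Equiv.Perm X} {c : ℝ}
    (hf : Continuous f) (hf' : Continuous f.symm) (he : Expansive f c) {ε : ℝ} (hε : 0 < ε) :
    ∃ N : ℕ, ∀ p q : X, (∀ n : ℤ, |n| ≤ N → dist ((f ^ n) p) ((f ^ n) q) ≤ c) → dist p q < ε := by
  by_contra! hcon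
  choose p q h1 h2 using hcon
  obtain ⟨x, -, φ, hφ, hx⟩ := (isCompact_univ (X := X × X)).tendsto_subseq
    (x := fun n => (p n, q n)) (fun _ => mem_univ _)
  have hd : Continuous (fun z : X × X => dist z.1 z.2) := continuous_dist
  have h3 : ε ≤ dist x.1 x.2 :=
    ge_of_tendsto ((hd.tendsto x).comp hx) (Filter.Eventually.of_forall fun n => h2 (φ n))
  have h4 : x.1 ≠ x.2 := by
    intro h
    rw [h, dist_self] at h3
    linarith
  obtain ⟨n, hn⟩ := he _ _ h4
  have hdn : Continuous (fun z : X × X => dist ((f ^ n) z.1) ((f ^ n) z.2)) :=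
    ((cont_zpow hf hf' n).comp continuous_fst).dist ((cont_zpow hf hf' n).comp continuous_snd)
  have h5 : dist ((f ^ n) x.1) ((f ^ n) x.2) ≤ c := by
    refine le_of_tendsto ((hdn.tendsto x).comp hx) ?_
    filter_upwards [Filter.eventually_ge_atTop n.natAbs] with k hk
    refine h1 (φ k) n ?_
    have := hφ.le_apply (x := k)
    rw [Int.abs_eq_natAbs]
    omega
  linarith

lemma contr_u {X : Type*} [MetricSpace X] [CompactSpace X] {f : Equiv.Perm X} {c : ℝ}
    (hf : Continuous f) (hf' : Continuous f.symm) (he : Expansive f c) {ε : ℝ} (hε : 0 < ε) :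
    ∃ N : ℕ, ∀ p q : X, (∀ n : ℕ, 1 ≤ n → dist ((f ^ (-(n : ℤ))) p) ((f ^ (-(n : ℤ))) q) ≤ c) →
      ∀ n : ℕ, N ≤ n → dist ((f ^ (-(n : ℤ))) p) ((f ^ (-(n : ℤ))) q) < ε := by
  obtain ⟨N, hN⟩ := unif_exp hf hf' he hε
  refine ⟨N + 1, fun p q h n hn => hN _ _ fun m hm => ?_⟩
  rw [← zadd, ← zadd]
  have h1 := abs_le.1 hm
  obtain ⟨k, hk⟩ : ∃ k : ℕ, m + -(n : ℤ) = -(k : ℤ) := ⟨(n - m).toNat, by omega⟩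
  rw [hk]
  exact h k (by omega)

lemma contr_s {X : Type*} [MetricSpace X] [CompactSpace X] {f : Equiv.Perm X} {c : ℝ}
    (hf : Continuous f) (hf' : Continuous f.symm) (he : Expansive f c) {ε : ℝ} (hε : 0 < ε) :
    ∃ N : ℕ, ∀ p q : X, (∀ n : ℕ, dist ((f ^ (n : ℤ)) p) ((f ^ (n : ℤ)) q) ≤ c) →
      ∀ n : ℕ, N ≤ n → dist ((f ^ (n : ℤ)) p) ((f ^ (n : ℤ)) q) < ε := by
  obtain ⟨N, hN⟩ := unif_exp hf hf' he hε
  refine ⟨N, fun p q h n hn => hN _ _ fun m hm => ?_⟩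
  rw [← zadd, ← zadd]
  have h1 := abs_le.1 hm
  obtain ⟨k, hk⟩ : ∃ k : ℕ, m + (n : ℤ) = (k : ℤ) := ⟨(n + m).toNat, by omega⟩
  rw [hk]
  exact h k

/-- Local unstable sets shrink with the distance at time zero. -/
lemma small_u {X : Type*} [MetricSpace X] [CompactSpace X] {f : Equiv.Perm X} {c : ℝ}
    (hf : Continuous f) (hf' : Continuous f.symm) (he : Expansive f c) {ε : ℝ} (hε : 0 < ε) :
    ∃ r > 0, ∀ p q : X, q ∈ Wu f c p → dist p q < r → q ∈ Wu f ε p := by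
  obtain ⟨N, hN⟩ := contr_u hf hf' he hε
  obtain ⟨r, hr, H⟩ := unif_mod hf hf' N hε
  refine ⟨r, hr, fun p q h hd n => ?_⟩
  rcases le_total N n with h1 | h1
  · exact hN p q (fun k _ => (h k).le) n h1
  · exact H p q hd _ (by rw [abs_neg, Nat.abs_cast]; exact_mod_cast h1)

lemma Wu_mono {X : Type*} [MetricSpace X] {f : Equiv.Perm X} {a b : ℝ} (h : a ≤ b) {x y : X}
    (hy : y ∈ Wu f a x) : y ∈ Wu f b x := fun n => (hy n).trans_le h

lemma Ws_mono {X : Type*} [MetricSpace X] {f : Equiv.Perm X} {a b : ℝ} (h : a ≤ b) {x y : X}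
    (hy : y ∈ Ws f a x) : y ∈ Ws f b x := fun n => (hy n).trans_le h

lemma Wu_symm {X : Type*} [MetricSpace X] {f : Equiv.Perm X} {a : ℝ} {x y : X}
    (hy : y ∈ Wu f a x) : x ∈ Wu f a y := fun n => by rw [dist_comm]; exact hy n

lemma Wu_trans {X : Type*} [MetricSpace X] {f : Equiv.Perm X} {a b c : ℝ} {x y z : X}
    (hy : y ∈ Wu f a x) (hz : z ∈ Wu f b y) (h : a + b ≤ c) : z ∈ Wu f c x := fun n => by
  have := dist_triangle ((f ^ (-(n : ℤ))) x) ((f ^ (-(n : ℤ))) y) ((f ^ (-(n : ℤ))) z)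
  linarith [hy n, hz n]

lemma Ws_trans {X : Type*} [MetricSpace X] {f : Equiv.Perm X} {a b c : ℝ} {x y z : X}
    (hy : y ∈ Ws f a x) (hz : z ∈ Ws f b y) (h : a + b ≤ c) : z ∈ Ws f c x := fun n => by
  have := dist_triangle ((f ^ (n : ℤ)) x) ((f ^ (n : ℤ)) y) ((f ^ (n : ℤ)) z)
  linarith [hy n, hz n]

lemma Wu_dist {X : Type*} [MetricSpace X] {f : Equiv.Perm X} {a : ℝ} {x y : X}
    (hy : y ∈ Wu f a x) : dist x y < a := by simpa using hy 0

lemma Ws_dist {X : Type*} [MetricSpace X] {f : Equiv.Perm X} {a : ℝ} {x y : X}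
    (hy : y ∈ Ws f a x) : dist x y < a := by simpa using hy 0

lemma Wu_self {X : Type*} [MetricSpace X] {f : Equiv.Perm X} {a : ℝ} (ha : 0 < a) (x : X) :
    x ∈ Wu f a x := fun n => by simpa using ha

lemma Ws_self {X : Type*} [MetricSpace X] {f : Equiv.Perm X} {a : ℝ} (ha : 0 < a) (x : X) :
    x ∈ Ws f a x := fun n => by simpa using ha

/-- Applying `f ^ m` with `m ≤ 0` preserves local unstable sets. -/
lemma Wu_back {X : Type*} [MetricSpace X] {f : Equiv.Perm X} {a : ℝ} {x y : X}
    (hy : y ∈ Wu f a x) {m : ℤ} (hm : m ≤ 0) : (f ^ m) y ∈ Wu f a ((f ^ m) x) := fun n => by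
  rw [← zadd, ← zadd]
  obtain ⟨k, hk⟩ : ∃ k : ℕ, -(n : ℤ) + m = -(k : ℤ) := ⟨(n - m).toNat, by omega⟩
  rw [hk]
  exact hy k

lemma Wu_z {X : Type*} [MetricSpace X] {f : Equiv.Perm X} {a : ℝ} {x y : X}
    (hy : y ∈ Wu f a x) {m : ℤ} (hm : m ≤ 0) : dist ((f ^ m) x) ((f ^ m) y) < a :=
  Wu_dist (Wu_back hy hm)

lemma Ws_z {X : Type*} [MetricSpace X] {f : Equiv.Perm X} {a : ℝ} {x y : X}
    (hy : y ∈ Ws f a x) {m : ℤ} (hm : 0 ≤ m) : dist ((f ^ m) x) ((f ^ m) y) < a := by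
  obtain ⟨k, rfl⟩ := Int.eq_ofNat_of_zero_le hm
  exact hy k

/-- The bracket is unique below the expansive constant. -/
lemma bracket_unique {X : Type*} [MetricSpace X] {f : Equiv.Perm X} {c : ℝ}
    (he : Expansive f c) {p q : X}
    (hs : ∀ n : ℕ, dist ((f ^ (n : ℤ)) p) ((f ^ (n : ℤ)) q) ≤ c)
    (hu : ∀ n : ℕ, dist ((f ^ (-(n : ℤ))) p) ((f ^ (-(n : ℤ))) q) ≤ c) : p = q := by
  by_contra h
  obtain ⟨n, hn⟩ := he p q h
  rcases le_total 0 n with h0 | h0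
  · obtain ⟨k, rfl⟩ := Int.eq_ofNat_of_zero_le h0
    exact absurd (hs k) (not_le.2 hn)
  · obtain ⟨k, hk⟩ : ∃ k : ℕ, n = -(k : ℤ) := ⟨(-n).toNat, by omega⟩
    rw [hk] at hn
    exact absurd (hu k) (not_le.2 hn)


/-! ### The plaque relations -/

/-- Points of the `η`-plaque of `a` can be moved along `δ`-stable sets to the plaque of `b`. -/
def HB {Y : Type*} [MetricSpace Y] (f : Equiv.Perm Y) (ρ δ η : ℝ) (a b : Y) : Prop :=
  ∀ u ∈ Wu f ρ a, dist a u < η → ∃ u' ∈ Ws f δ u, u' ∈ Wu f ρ b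

/-- Closeness in the extended system. -/
def RelV {Y : Type*} [MetricSpace Y] (f : Equiv.Perm Y) (ρ r ε : ℝ) (y y' : Y) : Prop :=
  ∀ n : ℤ, |(n : ℝ)| * ε ≤ 1 → dist ((f ^ n) y) ((f ^ n) y') < ε ∧
    HB f ρ ε (r - 2 * ε) ((f ^ n) y) ((f ^ n) y') ∧ HB f ρ ε (r - 2 * ε) ((f ^ n) y') ((f ^ n) y)

lemma HB_mono {Y : Type*} [MetricSpace Y] {f : Equiv.Perm Y} {ρ δ η δ' η' : ℝ} {a b : Y}
    (h : HB f ρ δ η a b) (hδ : δ ≤ δ') (hη : η' ≤ η) : HB f ρ δ' η' a b := by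
  intro u hu hd
  obtain ⟨u', h1, h2⟩ := h u hu (hd.trans_le hη)
  exact ⟨u', Ws_mono hδ h1, h2⟩

lemma HB_trans {Y : Type*} [MetricSpace Y] {f : Equiv.Perm Y} {ρ r ε₁ ε₂ : ℝ} {a b c : Y}
    (hd : dist a b < ε₁) (h1 : HB f ρ ε₁ (r - 2 * ε₁) a b) (h2 : HB f ρ ε₂ (r - 2 * ε₂) b c)
    (hε : 0 < ε₂) :
    HB f ρ (ε₁ + ε₂) (r - 2 * (ε₁ + ε₂)) a c := by
  intro u hu hau
  obtain ⟨u', h3, h4⟩ := h1 u hu (by linarith)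
  have h5 : dist b u' < r - 2 * ε₂ := by
    have := dist_triangle b a u'
    have := dist_triangle a u u'
    rw [dist_comm b a] at *
    linarith [Ws_dist h3]
  obtain ⟨u'', h6, h7⟩ := h2 u' h4 h5
  exact ⟨u'', Ws_trans h3 h6 le_rfl, h7⟩

lemma RelV_refl {Y : Type*} [MetricSpace Y] {f : Equiv.Perm Y} {ρ r ε : ℝ} (hε : 0 < ε) (y : Y) :
    RelV f ρ r ε y y := by
  intro n _
  exact ⟨by simpa using hε, fun u hu _ => ⟨u, Ws_self hε u, hu⟩,
    fun u hu _ => ⟨u, Ws_self hε u, hu⟩⟩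

lemma RelV_symm {Y : Type*} [MetricSpace Y] {f : Equiv.Perm Y} {ρ r ε : ℝ} {y y' : Y}
    (h : RelV f ρ r ε y y') : RelV f ρ r ε y' y := by
  intro n hn
  obtain ⟨h1, h2, h3⟩ := h n hn
  exact ⟨by rwa [dist_comm], h3, h2⟩

lemma RelV_mono {Y : Type*} [MetricSpace Y] {f : Equiv.Perm Y} {ρ r ε ε' : ℝ} {y y' : Y}
    (h : RelV f ρ r ε y y') (hε : ε ≤ ε') : RelV f ρ r ε' y y' := by
  intro n hn
  have : |(n : ℝ)| * ε ≤ |(n : ℝ)| * ε' := by gcongr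
  obtain ⟨h1, h2, h3⟩ := h n (this.trans hn)
  exact ⟨h1.trans_le hε, HB_mono h2 hε (by linarith), HB_mono h3 hε (by linarith)⟩

lemma RelV_trans {Y : Type*} [MetricSpace Y] {f : Equiv.Perm Y} {ρ r ε₁ ε₂ : ℝ} {a b c : Y}
    (h1 : RelV f ρ r ε₁ a b) (h2 : RelV f ρ r ε₂ b c) (hε₁ : 0 < ε₁) (hε₂ : 0 < ε₂) :
    RelV f ρ r (ε₁ + ε₂) a c := by
  intro n hn
  have e1 : |(n : ℝ)| * ε₁ ≤ |(n : ℝ)| * (ε₁ + ε₂) := by gcongr; linarith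
  have e2 : |(n : ℝ)| * ε₂ ≤ |(n : ℝ)| * (ε₁ + ε₂) := by gcongr; linarith
  obtain ⟨a1, a2, a3⟩ := h1 n (e1.trans hn)
  obtain ⟨b1, b2, b3⟩ := h2 n (e2.trans hn)
  refine ⟨?_, HB_trans a1 a2 b2 hε₂, ?_⟩
  · have := dist_triangle ((f ^ n) a) ((f ^ n) b) ((f ^ n) c)
    linarith
  · rw [dist_comm] at b1
    have := HB_trans b1 b3 a3 hε₁
    rwa [add_comm ε₂ ε₁] at this

lemma RelV_exists {Y : Type*} [MetricSpace Y] [CompactSpace Y] (f : Equiv.Perm Y) (ρ r : ℝ)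
    (y y' : Y) : ∃ ε, 0 < ε ∧ RelV f ρ r ε y y' := by
  refine ⟨2 + |r| + dist y y', by positivity, ?_⟩
  have hd : 0 ≤ dist y y' := dist_nonneg
  have hr : 0 ≤ |r| := abs_nonneg r
  have hr' : r ≤ |r| := le_abs_self r
  intro n hn
  have hn0 : n = 0 := by
    by_contra h
    have h1 : (1 : ℝ) ≤ |(n : ℝ)| := by
      have := Int.one_le_abs h
      exact_mod_cast this
    nlinarith
  subst hn0
  have hv : ∀ a b : Y, HB f ρ (2 + |r| + dist y y') (r - 2 * (2 + |r| + dist y y')) a b := by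
    intro a b u _ h
    have : 0 ≤ dist a u := dist_nonneg
    linarith
  refine ⟨?_, hv _ _, hv _ _⟩
  simp only [zpow_zero, Equiv.Perm.coe_one, id]
  linarith

/-- Generic points: the backward orbit is dense, infinitely often. -/
def IsGen {Y : Type*} [TopologicalSpace Y] (f : Equiv.Perm Y) (y : Y) : Prop :=
  ∀ U : Set Y, IsOpen U → U.Nonempty → ∀ N : ℕ, ∃ n : ℕ, N ≤ n ∧ (f ^ (-(n : ℤ))) y ∈ U

/-- The type of generic points, to be equipped with a finer metric. -/
structure Gen {Y : Type*} [TopologicalSpace Y] (f : Equiv.Perm Y) where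
  /-- The underlying point. -/
  pt : Y
  gen : IsGen f pt

/-- The distance function of the extended system. -/
noncomputable def dV {Y : Type*} [MetricSpace Y] (f : Equiv.Perm Y) (ρ r : ℝ) (y y' : Y) : ℝ :=
  sInf {ε | 0 < ε ∧ RelV f ρ r ε y y'}

lemma dV_bdd {Y : Type*} [MetricSpace Y] (f : Equiv.Perm Y) (ρ r : ℝ) (y y' : Y) :
    BddBelow {ε | 0 < ε ∧ RelV f ρ r ε y y'} := ⟨0, fun _ h => h.1.le⟩

lemma dV_le {Y : Type*} [MetricSpace Y] {f : Equiv.Perm Y} {ρ r ε : ℝ} {y y' : Y} (hε : 0 < ε)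
    (h : RelV f ρ r ε y y') : dV f ρ r y y' ≤ ε := csInf_le (dV_bdd f ρ r y y') ⟨hε, h⟩

lemma RelV_of_dV {Y : Type*} [MetricSpace Y] [CompactSpace Y] {f : Equiv.Perm Y} {ρ r ε : ℝ}
    {y y' : Y} (h : dV f ρ r y y' < ε) : RelV f ρ r ε y y' := by
  obtain ⟨ε', h1, h2⟩ := exists_lt_of_csInf_lt (RelV_exists f ρ r y y') h
  exact RelV_mono h1.2 h2.le

lemma dV_nonneg {Y : Type*} [MetricSpace Y] (f : Equiv.Perm Y) (ρ r : ℝ) (y y' : Y) :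
    0 ≤ dV f ρ r y y' := Real.sInf_nonneg fun _ h => h.1.le

lemma dist_le_dV {Y : Type*} [MetricSpace Y] [CompactSpace Y] (f : Equiv.Perm Y) (ρ r : ℝ)
    (y y' : Y) : dist y y' ≤ dV f ρ r y y' := by
  refine le_of_forall_gt fun ε hε => ?_
  have := (RelV_of_dV hε 0 (by simp)).1
  simpa using this

/-- The metric on generic points. -/
@[reducible]
noncomputable def genMetric {Y : Type*} [MetricSpace Y] [CompactSpace Y] (f : Equiv.Perm Y)
    (ρ r : ℝ) : MetricSpace (Gen f) where
  dist a b := dV f ρ r a.pt b.pt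
  dist_self a := le_antisymm
    (le_of_forall_gt_imp_ge_of_dense fun _ hε => dV_le hε (RelV_refl hε _)) (dV_nonneg _ _ _ _ _)
  dist_comm a b := by
    unfold dV
    congr 1
    ext ε
    exact ⟨fun h => ⟨h.1, RelV_symm h.2⟩, fun h => ⟨h.1, RelV_symm h.2⟩⟩
  dist_triangle a b c := by
    refine le_of_forall_pos_le_add fun ε hε => ?_
    have h1 := RelV_of_dV (show dV f ρ r a.pt b.pt < dV f ρ r a.pt b.pt + ε / 2 by linarith)
    have h2 := RelV_of_dV (show dV f ρ r b.pt c.pt < dV f ρ r b.pt c.pt + ε / 2 by linarith)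
    have n1 := dV_nonneg f ρ r a.pt b.pt
    have n2 := dV_nonneg f ρ r b.pt c.pt
    have := dV_le (by linarith) (RelV_trans h1 h2 (by linarith) (by linarith))
    linarith
  eq_of_dist_eq_zero {a b} h := by
    have h1 := dist_le_dV f ρ r a.pt b.pt
    have h2 : dist a.pt b.pt ≤ 0 := h1.trans h.le
    have h3 : a.pt = b.pt := dist_le_zero.1 h2
    cases a; cases b; simp_all

/-- The constants used in the construction. -/
structure Cst {Y : Type*} [MetricSpace Y] (f : Equiv.Perm Y) (c ρ r δ₀ : ℝ) : Prop where
  cont : Continuous f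
  cont' : Continuous f.symm
  exp : Expansive f c
  hρ : 0 < ρ
  hρc : 2 * ρ ≤ c
  hr : 0 < r
  small : ∀ p q : Y, q ∈ Wu f ρ p → dist p q < r → q ∈ Wu f (ρ / 4) p
  hδ : 0 < δ₀
  hδr : δ₀ ≤ r / 4
  hδρ : δ₀ ≤ ρ / 4

lemma Cst_exists {Y : Type*} [MetricSpace Y] [CompactSpace Y] {f : Equiv.Perm Y} {c : ℝ}
    (hf : Continuous f) (hf' : Continuous f.symm) (hc : 0 < c) (he : Expansive f c) :
    ∃ ρ r δ₀, Cst f c ρ r δ₀ := by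
  obtain ⟨r, hr, H⟩ := small_u hf hf' he (ε := c / 2 / 4) (by positivity)
  refine ⟨c / 2, r, min (r / 4) (c / 2 / 4), hf, hf', he, by positivity, by linarith, hr,
    fun p q h hd => H p q (Wu_mono (by linarith) h) hd, ?_, min_le_left _ _, min_le_right _ _⟩
  apply lt_min <;> positivity

lemma transport {Y : Type*} [MetricSpace Y] [CompactSpace Y] {f : Equiv.Perm Y} {c ρ r δ₀ : ℝ}
    (C : Cst f c ρ r δ₀) {η : ℝ} (hη : 0 < η) (hηr : η ≤ r / 4) {ε : ℝ} (hε : 0 < ε) :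
    ∃ n₀ : ℕ, ∀ L : ℤ, n₀ ≤ L → ∀ a b : Y, HB f ρ δ₀ η a b →
      (∀ j : ℤ, 0 ≤ j → j ≤ L → dist ((f ^ j) a) ((f ^ j) b) < δ₀) →
      HB f ρ ε r ((f ^ L) a) ((f ^ L) b) := by
  obtain ⟨N1, h1⟩ := contr_u C.cont C.cont' C.exp hη
  obtain ⟨N2, h2⟩ := contr_s C.cont C.cont' C.exp hε
  have hρ := C.hρ
  have hρc := C.hρc
  have hδr := C.hδr
  have hδρ := C.hδρ
  have hr := C.hr
  refine ⟨max N1 N2, fun L' hL a b hab hd z hz hzr => ?_⟩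
  obtain ⟨L, rfl⟩ : ∃ L : ℕ, L' = (L : ℤ) := ⟨L'.toNat, by omega⟩
  have hL1 : N1 ≤ L := by omega
  have hL2 : N2 ≤ L := by omega
  have hz' := C.small _ _ hz hzr
  set u := (f ^ (-(L : ℤ))) z with hu
  have hzu : ∀ j : ℤ, (f ^ (j - L)) z = (f ^ j) u := by
    intro j; rw [hu, ← zadd]; rfl
  have hu4 : u ∈ Wu f (ρ / 4) a := by
    have := Wu_back hz' (m := -(L : ℤ)) (by omega)
    rwa [zinv'] at this
  have hua : dist a u < η := by
    have := h1 _ _ (fun k _ => ((hz k).le.trans (by linarith : ρ ≤ c))) L hL1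
    rwa [zinv'] at this
  obtain ⟨u', hs', hu'⟩ := hab u (Wu_mono (by linarith) hu4) hua
  have hab0 : dist a b < δ₀ := by simpa using hd 0 le_rfl (by omega)
  have hub : dist b u' < r := by
    have e1 := dist_triangle b a u'
    have e2 := dist_triangle a u u'
    have e3 := Ws_dist hs'
    rw [dist_comm b a] at e1
    linarith
  have hu4' := C.small _ _ hu' hub
  refine ⟨(f ^ (L : ℤ)) u', fun n => ?_, fun n => ?_⟩
  · have := h2 u u' (fun k => (hs' k).le.trans (by linarith)) (n + L) (by omega)
    rw [← zadd]
    push_cast at this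
    have e := hzu (n + L)
    rw [add_sub_cancel_right] at e
    rwa [e]
  · rw [← zadd, ← zadd]
    rcases le_or_gt (n : ℤ) L with hn | hn
    · have e1 := hd (-(n : ℤ) + L) (by omega) (by omega)
      have e2 := Wu_z hz' (m := -(n : ℤ)) (by omega)
      rw [← zadd] at e2
      have e3 := Ws_z hs' (m := -(n : ℤ) + L) (by omega)
      have e4 := hzu (-(n : ℤ) + L)
      rw [add_sub_cancel_right] at e4
      rw [e4] at e2
      have t1 := dist_triangle ((f ^ (-(n : ℤ) + L)) b) ((f ^ (-(n : ℤ) + L)) a)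
        ((f ^ (-(n : ℤ) + L)) u')
      have t2 := dist_triangle ((f ^ (-(n : ℤ) + L)) a) ((f ^ (-(n : ℤ) + L)) u)
        ((f ^ (-(n : ℤ) + L)) u')
      rw [dist_comm ((f ^ (-(n : ℤ) + L)) a) ((f ^ (-(n : ℤ) + L)) b)] at e1
      linarith
    · have := Wu_z hu4' (m := -(n : ℤ) + L) (by omega)
      linarith

/-- The main criterion for closeness in the extended system. -/
lemma RelV_of_back {Y : Type*} [MetricSpace Y] [CompactSpace Y] {f : Equiv.Perm Y} {c ρ r δ₀ : ℝ}
    (C : Cst f c ρ r δ₀) {η : ℝ} (hη : 0 < η) (hηr : η ≤ r / 4) {ε : ℝ} (hε : 0 < ε) :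
    ∃ M : ℕ, ∃ γ > 0, ∀ y y' : Y, ∀ n : ℤ, M ≤ n →
      HB f ρ δ₀ η ((f ^ (-n)) y) ((f ^ (-n)) y') → HB f ρ δ₀ η ((f ^ (-n)) y') ((f ^ (-n)) y) →
      (∀ j : ℤ, -n ≤ j → j ≤ M → dist ((f ^ j) y) ((f ^ j) y') < γ) →
      RelV f ρ r ε y y' := by
  obtain ⟨n₀, H⟩ := transport C hη hηr hε
  refine ⟨n₀ + ⌈1 / ε⌉₊, min δ₀ ε, lt_min C.hδ hε, fun y y' n hn h1 h2 h3 m hm => ?_⟩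
  have hm' : |m| ≤ (⌈1 / ε⌉₊ : ℤ) := by
    have e1 : |(m : ℝ)| ≤ 1 / ε := by rwa [le_div_iff₀ hε]
    have e2 := e1.trans (Nat.le_ceil (1 / ε))
    exact_mod_cast e2
  have hm2 := abs_le.1 hm'
  push_cast at hn h3
  refine ⟨(h3 m (by omega) (by omega)).trans_le (min_le_right _ _), ?_, ?_⟩
  · have := H (n + m) (by omega) _ _ h1 fun j hj hj' => by
      rw [← zadd, ← zadd]
      exact (h3 _ (by omega) (by omega)).trans_le (min_le_left _ _)
    rw [← zadd, ← zadd] at this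
    have e : n + m + -n = m := by ring
    rw [e] at this
    exact HB_mono this le_rfl (by linarith)
  · have := H (n + m) (by omega) _ _ h2 fun j hj hj' => by
      rw [← zadd, ← zadd, dist_comm]
      exact (h3 _ (by omega) (by omega)).trans_le (min_le_left _ _)
    rw [← zadd, ← zadd] at this
    have e : n + m + -n = m := by ring
    rw [e] at this
    exact HB_mono this le_rfl (by linarith)


/-! ### Completing a generic part of a Smale space -/

open UniformSpace in
theorem completion_smale {Y : Type*} [MetricSpace Y] {f : Equiv.Perm Y} {c : ℝ}
    (hf : Continuous f) (hf' : Continuous f.symm) (hc : 0 < c) (he : Expansive f c)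
    {D : Type} [MetricSpace D] (F : Equiv.Perm D) (ι : D → Y)
    (hTB : TotallyBounded (univ : Set D)) (hF : UniformContinuous F)
    (hF' : UniformContinuous F.symm) (hι : ∀ a b, dist (ι a) (ι b) ≤ dist a b)
    (hιF : ∀ a, ι (F a) = f (ι a)) (hdense : DenseRange ι) [CompactSpace Y]
    {δ₁ : ℝ} (hδ₁ : 0 < δ₁)
    (H1 : ∀ ε > 0, ∃ M : ℕ, ∃ γ > 0, ∀ a b : D, ∀ n : ℕ, M ≤ n →
      dist ((F ^ (-(n : ℤ))) a) ((F ^ (-(n : ℤ))) b) < δ₁ →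
      (∀ j : ℤ, -(n : ℤ) ≤ j → j ≤ M → dist ((f ^ j) (ι a)) ((f ^ j) (ι b)) < γ) →
      dist a b ≤ ε)
    (H2 : ∀ ε > 0, ∃ δ > 0, ∀ a b : D, dist a b < δ → ∃ w : D, ∀ n : ℕ,
      dist ((F ^ (n : ℤ)) a) ((F ^ (n : ℤ)) w) ≤ ε ∧
      dist ((F ^ (-(n : ℤ))) b) ((F ^ (-(n : ℤ))) w) ≤ ε)
    (H3 : TopTransitive F) :
    ∃ (_ : CompactSpace (Completion D)) (g : Equiv.Perm (Completion D)) (π : Completion D → Y),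
      IsSmale g ∧ TopTransitive g ∧ IsFactorMap g f π ∧ UResolving g π ∧
      (∀ a : D, g a = (F a : D)) ∧ ∀ a : D, π a = ι a := by
  have hcomp : CompactSpace (Completion D) := by
    refine ⟨?_⟩
    rw [isCompact_iff_totallyBounded_isComplete]
    refine ⟨?_, isComplete_univ⟩
    have h1 := (hTB.image (Completion.uniformContinuous_coe D)).closure
    rwa [image_univ, (Completion.denseRange_coe (α := D)).closure_range] at h1
  let g : Equiv.Perm (Completion D) :=
    { toFun := Completion.map F
      invFun := Completion.map F.symm
      left_inv := fun x => by
        rw [← Function.comp_apply (f := Completion.map F.symm), Completion.map_comp hF' hF]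
        simp
      right_inv := fun x => by
        rw [← Function.comp_apply (f := Completion.map F), Completion.map_comp hF hF']
        simp }
  have hgF : ∀ a : D, g a = (F a : D) := fun a => Completion.map_coe hF a
  have hg : Continuous g := Completion.continuous_map
  have hg' : Continuous g.symm := Completion.continuous_map
  have hιu : UniformContinuous ι := (LipschitzWith.of_dist_le_mul (K := 1)
    (fun a b => by simpa using hι a b)).uniformContinuous
  let π : Completion D → Y := Completion.extension ι
  have hπ : ∀ a : D, π a = ι a := fun a => Completion.extension_coe hιu a
  have hπc : Continuous π := Completion.continuous_extension
  have hπg : ∀ x, π (g x) = f (π x) := by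
    intro x
    induction x using Completion.induction_on with
    | hp => exact isClosed_eq (hπc.comp hg) (hf.comp hπc)
    | ih a => rw [hgF, hπ, hπ, hιF]
  have hgn : ∀ (n : ℤ) (a : D), (g ^ n) a = ((F ^ n) a : D) := fun n a =>
    (semiconj_zpow (α := fun a : D => (a : Completion D)) (fun a => (hgF a).symm) n a).symm
  have hgc : ∀ n : ℤ, Continuous (g ^ n : Equiv.Perm (Completion D)) := cont_zpow hg hg'
  have hfc : ∀ n : ℤ, Continuous (f ^ n : Equiv.Perm Y) := cont_zpow hf hf'
  have hD : DenseRange (fun a : D => (a : Completion D)) := Completion.denseRange_coe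
  have hD2 : DenseRange (Prod.map (fun a : D => (a : Completion D))
    (fun a : D => (a : Completion D))) := hD.prodMap hD
  have R : ∀ x y : Completion D, π x = π y →
      (∀ M : ℕ, ∃ n : ℕ, M ≤ n ∧ dist ((g ^ (-(n : ℤ))) x) ((g ^ (-(n : ℤ))) y) < δ₁) → x = y := by
    intro x y hxy hn
    refine eq_of_forall_dist_le fun ε hε => ?_
    obtain ⟨M, γ, hγ, H⟩ := H1 ε hε
    obtain ⟨n, hMn, hd⟩ := hn M
    let U : Set (Completion D × Completion D) :=
      {p | dist ((g ^ (-(n : ℤ))) p.1) ((g ^ (-(n : ℤ))) p.2) < δ₁} ∩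
      ⋂ j ∈ Finset.Icc (-(n : ℤ)) M, {p | dist ((f ^ j) (π p.1)) ((f ^ j) (π p.2)) < γ}
    have hU : IsOpen U := by
      refine IsOpen.inter ?_ (isOpen_biInter_finset fun j _ => ?_)
      · exact isOpen_lt (((hgc _).comp continuous_fst).dist ((hgc _).comp continuous_snd))
          continuous_const
      · exact isOpen_lt ((((hfc _).comp hπc).comp continuous_fst).dist
          (((hfc _).comp hπc).comp continuous_snd)) continuous_const
    have hxU : (x, y) ∈ U := by
      refine ⟨hd, ?_⟩
      simp only [mem_iInter]
      intro j _
      simpa [hxy] using hγ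
    have h1 := hD2.open_subset_closure_inter hU hxU
    have h2 : U ∩ range (Prod.map (fun a : D => (a : Completion D))
        (fun a : D => (a : Completion D))) ⊆ {p | dist p.1 p.2 ≤ ε} := by
      rintro _ ⟨hp, ⟨⟨a, b⟩, rfl⟩⟩
      obtain ⟨p1, p2⟩ := hp
      simp only [mem_iInter] at p2
      simp only [mem_ofPred_eq, Prod.map_apply, hgn, Completion.dist_eq] at p1 ⊢
      refine H a b n hMn p1 fun j hj hj' => ?_
      have := p2 j (Finset.mem_Icc.2 ⟨hj, hj'⟩)
      simpa [hπ] using this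
    have h3 : IsClosed {p : Completion D × Completion D | dist p.1 p.2 ≤ ε} :=
      isClosed_le continuous_dist continuous_const
    exact (closure_minimal h2 h3) h1
  have hπlip : ∀ x y, dist (π x) (π y) ≤ dist x y := by
    intro x y
    induction x, y using Completion.induction_on₂ with
    | hp => exact isClosed_le ((hπc.comp continuous_fst).dist (hπc.comp continuous_snd))
              continuous_dist
    | ih a b => rw [hπ, hπ, Completion.dist_eq]; exact hι a b
  have hπn := semiconj_zpow hπg
  have hexp : Expansive g (min c (δ₁ / 2)) := by
    intro x y hxy
    by_contra! hcon
    refine hxy (R x y ?_ fun M => ⟨M, le_rfl, ?_⟩)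
    · by_contra h
      obtain ⟨n, hn⟩ := he _ _ h
      have h1 := hπlip ((g ^ n) x) ((g ^ n) y)
      rw [hπn, hπn] at h1
      have := (hcon n).trans (min_le_left _ _)
      linarith
    · have := (hcon (-(M : ℤ))).trans (min_le_right _ _)
      linarith
  have hc' : 0 < min c (δ₁ / 2) := lt_min hc (by linarith)
  refine ⟨hcomp, g, π, ⟨hg, hg', ⟨_, hc', hexp⟩, ?_⟩, ?_, ⟨hπc, ?_, hπg⟩, ?_, hgF, hπ⟩
  · refine ⟨min c (δ₁ / 2) / 2, by linarith, fun ε hε hε0 => ?_⟩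
    obtain ⟨δ, hδ, H⟩ := H2 (ε / 2) (by linarith)
    refine ⟨δ, hδ, fun x y hxy => ?_⟩
    let T : Set ((Completion D × Completion D) × Completion D) :=
      ⋂ n : ℕ, ({p | dist ((g ^ (n : ℤ)) p.1.1) ((g ^ (n : ℤ)) p.2) ≤ ε / 2} ∩
        {p | dist ((g ^ (-(n : ℤ))) p.1.2) ((g ^ (-(n : ℤ))) p.2) ≤ ε / 2})
    have hT : IsClosed T := by
      refine isClosed_iInter fun n => IsClosed.inter ?_ ?_
      · exact isClosed_le (((hgc _).comp (continuous_fst.comp continuous_fst)).dist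
          ((hgc _).comp continuous_snd)) continuous_const
      · exact isClosed_le (((hgc _).comp (continuous_snd.comp continuous_fst)).dist
          ((hgc _).comp continuous_snd)) continuous_const
    have hT' : IsClosed (Prod.fst '' T) := isClosedMap_fst_of_compactSpace _ hT
    have hU : IsOpen {p : Completion D × Completion D | dist p.1 p.2 < δ} :=
      isOpen_lt continuous_dist continuous_const
    have h1 := hD2.open_subset_closure_inter hU (show (x, y) ∈ _ from hxy)
    have h2 : {p : Completion D × Completion D | dist p.1 p.2 < δ} ∩
        range (Prod.map (fun a : D => (a : Completion D))
        (fun a : D => (a : Completion D))) ⊆ Prod.fst '' T := by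
      rintro _ ⟨hp, ⟨⟨a, b⟩, rfl⟩⟩
      simp only [mem_ofPred_eq, Prod.map_apply, Completion.dist_eq] at hp
      obtain ⟨w, hw⟩ := H a b hp
      refine ⟨(((a : Completion D), (b : Completion D)), (w : Completion D)), ?_, rfl⟩
      simp only [T, mem_iInter]
      intro n
      constructor
      · simpa only [mem_ofPred_eq, hgn, Completion.dist_eq] using (hw n).1
      · simpa only [mem_ofPred_eq, hgn, Completion.dist_eq] using (hw n).2
    obtain ⟨⟨p, w⟩, hw, hp⟩ := (closure_minimal h2 hT') h1
    simp only at hp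
    subst hp
    simp only [T, mem_iInter] at hw
    refine ⟨w, ⟨fun n => ?_, fun n => ?_⟩, ?_⟩
    · have := (hw n).1
      simp only [mem_ofPred_eq] at this
      linarith
    · have := (hw n).2
      simp only [mem_ofPred_eq] at this
      linarith
    · rintro w' ⟨hs, hu⟩
      refine bracket_unique hexp (fun n => ?_) (fun n => ?_)
      · have := (hw n).1
        simp only [mem_ofPred_eq] at this
        have t := dist_triangle_left ((g ^ (n : ℤ)) w') ((g ^ (n : ℤ)) w) ((g ^ (n : ℤ)) x)
        linarith [hs n]
      · have := (hw n).2
        simp only [mem_ofPred_eq] at this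
        have t := dist_triangle_left ((g ^ (-(n : ℤ))) w') ((g ^ (-(n : ℤ))) w)
          ((g ^ (-(n : ℤ))) y)
        linarith [hu n]
  · intro U V hU hV hUn hVn
    obtain ⟨a, ha⟩ := hD.exists_mem_open hU hUn
    obtain ⟨b, hb⟩ := hD.exists_mem_open hV hVn
    have hcoe : Continuous (fun a : D => (a : Completion D)) := Completion.continuous_coe D
    obtain ⟨n, w, hw1, hw2⟩ := H3 _ _ (hU.preimage hcoe) (hV.preimage hcoe) ⟨a, ha⟩ ⟨b, hb⟩
    refine ⟨n, (w : Completion D), ?_, hw2⟩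
    have : (((F ^ (n : ℤ)) w : D) : Completion D) ∈ U := hw1
    rw [← hgn] at this
    exact this
  · have h1 : IsClosed (range π) := (isCompact_range hπc).isClosed
    have h2 : range ι ⊆ range π := by
      rintro _ ⟨a, rfl⟩
      exact ⟨a, hπ a⟩
    have h3 := closure_minimal h2 h1
    rw [hdense.closure_range] at h3
    exact fun y => h3 (mem_univ y)
  · intro z x hx y hy hxy
    refine R x y hxy fun M => ?_
    have h1 : Tendsto (fun n : ℕ => dist ((g ^ (-(n : ℤ))) x) ((g ^ (-(n : ℤ))) y)) atTop
        (𝓝 0) := by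
      refine squeeze_zero (fun _ => dist_nonneg) (fun n => dist_triangle_left _ _
        ((g ^ (-(n : ℤ))) z)) ?_
      simpa using Tendsto.add hx hy
    obtain ⟨n, h2, h3⟩ := ((h1.eventually (gt_mem_nhds hδ₁)).and (eventually_ge_atTop M)).exists
    exact ⟨n, h3, h2⟩


/-! ### Finitely presented systems have finite covers by small rectangles -/

/-- Finite closed covers by arbitrarily small rectangles. -/
def RectCover {Y : Type*} [MetricSpace Y] (f : Equiv.Perm Y) : Prop :=
  ∀ ε > 0, ∃ (I : Type) (_ : Fintype I) (K : I → Set Y), (∀ i, IsClosed (K i)) ∧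
    (∀ y, ∃ i, y ∈ K i) ∧ ∀ i, ∀ p ∈ K i, ∀ q ∈ K i, ∃ w ∈ Ws f ε p, w ∈ Wu f ε q

lemma shift_zpow {A : Type*} (n : ℤ) (x : ℤ → A) (i : ℤ) : ((shiftE A) ^ n) x i = x (i + n) := by
  induction n using Int.induction_on generalizing x i with
  | zero => simp
  | succ k ih =>
    rw [zpow_add_one, Equiv.Perm.mul_apply, ih]
    change x (i + k + 1) = _
    congr 1; ring
  | pred k ih =>
    rw [zpow_sub_one, Equiv.Perm.mul_apply, ih]
    change x (i + -k - 1) = _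
    congr 1; ring

lemma sft_splice {A : Type*} {S : Set (ℤ → A)} (hS : IsSFT S) :
    ∃ l : ℕ, ∀ s ∈ S, ∀ t ∈ S, (∀ j : ℤ, 0 ≤ j → j < l → s j = t j) →
      (fun j : ℤ => if j < 0 then t j else s j) ∈ S := by
  obtain ⟨Fw, hfin, rfl⟩ := hS
  obtain ⟨l, hl⟩ : ∃ l : ℕ, ∀ w ∈ Fw, w.1 ≤ l := by
    obtain ⟨l, hl⟩ := (hfin.image Sigma.fst).bddAbove
    exact ⟨l, fun w hw => hl ⟨w, hw, rfl⟩⟩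
  refine ⟨l, fun s hs t ht h w hw hocc => ?_⟩
  obtain ⟨i, hi⟩ := hocc
  have hk := hl w hw
  by_cases hi0 : i < 0
  · refine ht w hw ⟨i, fun j => ?_⟩
    rw [← hi j]
    have hj := j.2
    by_cases hneg : i + (j : ℤ) < 0
    · simp [hneg]
    · simp only [hneg, if_false]
      exact (h _ (by omega) (by omega)).symm
  · refine hs w hw ⟨i, fun j => ?_⟩
    rw [← hi j]
    have hneg : ¬ (i + (j : ℤ) < 0) := by omega
    simp only [hneg, if_false]

lemma eval_clopen {N : ℕ} (j : ℤ) (a : Fin N) : IsClopen {t : ℤ → Fin N | t j = a} := by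
  have h : Continuous (fun t : ℤ → Fin N => t j) := continuous_apply j
  exact (isClopen_discrete {a}).preimage h

lemma cyl_open {N : ℕ} (x : ℤ → Fin N) (J : Finset ℤ) :
    IsOpen {t : ℤ → Fin N | ∀ j ∈ J, t j = x j} := by
  have : {t : ℤ → Fin N | ∀ j ∈ J, t j = x j} = ⋂ j ∈ J, {t | t j = x j} := by
    ext t; simp
  rw [this]
  refine isOpen_biInter_finset fun j _ => ?_
  exact (eval_clopen j _).isOpen

lemma sft_closed {N : ℕ} {S : Set (ℤ → Fin N)} (hS : IsSFT S) : IsClosed S := by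
  obtain ⟨Fw, hfin, rfl⟩ := hS
  have : {x : ℤ → Fin N | ∀ w ∈ Fw, ¬ OccursIn w.2 x} =
      ⋂ w ∈ Fw, ⋂ i : ℤ, (⋂ j : Fin w.1, {x | x (i + (j : ℤ)) = w.2 j})ᶜ := by
    ext x; simp [OccursIn]
  rw [this]
  refine isClosed_biInter fun w _ => isClosed_iInter fun i => ?_
  rw [isClosed_compl_iff]
  refine isOpen_iInter_of_finite fun j => ?_
  exact (eval_clopen _ _).isOpen

lemma sft_modulus {N : ℕ} {S : Set (ℤ → Fin N)} (hS : IsClosed S) {Y : Type*} [MetricSpace Y]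
    {φ : (ℤ → Fin N) → Y} (hφ : ContinuousOn φ S) {ε : ℝ} (hε : 0 < ε) :
    ∃ k : ℕ, ∀ s ∈ S, ∀ t ∈ S, (∀ j : ℤ, |j| ≤ k → s j = t j) → dist (φ s) (φ t) < ε := by
  have hloc : ∀ s ∈ S, ∃ k : ℕ, ∀ t ∈ S, (∀ j ∈ Finset.Icc (-(k : ℤ)) k, t j = s j) →
      dist (φ t) (φ s) < ε / 2 := by
    intro s hs
    have h1 := hφ s hs (Metric.ball_mem_nhds (φ s) (half_pos hε))
    rw [Filter.mem_map, mem_nhdsWithin] at h1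
    obtain ⟨U, hU, hsU, hUS⟩ := h1
    rw [isOpen_pi_iff] at hU
    obtain ⟨I, u, h2, h3⟩ := hU s hsU
    obtain ⟨k, hk⟩ : ∃ k : ℕ, ∀ i ∈ I, i.natAbs ≤ k :=
      ⟨I.sup Int.natAbs, fun i hi => Finset.le_sup (f := Int.natAbs) hi⟩
    refine ⟨k, fun t ht h => ?_⟩
    refine hUS ⟨h3 fun i hi => ?_, ht⟩
    rw [h i (by have := hk i hi; rw [Finset.mem_Icc]; omega)]
    exact (h2 i hi).2
  choose! k hk using hloc
  obtain ⟨T, hTS, hT⟩ := hS.isCompact.elim_nhds_subcover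
    (fun s => {t | ∀ j ∈ Finset.Icc (-(k s : ℤ)) (k s), t j = s j})
    (fun s _ => (cyl_open s _).mem_nhds (fun _ _ => rfl))
  refine ⟨T.sup k, fun s hs t ht hst => ?_⟩
  obtain ⟨x, hx, hsx⟩ := mem_iUnion₂.1 (hT hs)
  have hkx : k x ≤ T.sup k := Finset.le_sup hx
  have htx : ∀ j ∈ Finset.Icc (-(k x : ℤ)) (k x), t j = x j := by
    intro j hj
    rw [← hsx j hj]
    rw [Finset.mem_Icc] at hj
    exact (hst j (by rw [Int.abs_eq_natAbs]; omega)).symm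
  have e1 := hk x (hTS x hx) s hs hsx
  have e2 := hk x (hTS x hx) t ht htx
  have := dist_triangle_right (φ s) (φ t) (φ x)
  linarith

theorem rectCover_of_fp {Y : Type*} [MetricSpace Y] {f : Equiv.Perm Y} (h : FinitelyPresented f) :
    RectCover f := by
  obtain ⟨-, -, -, N, S, hS, hinv, -, φ, hφc, hφs, hφf⟩ := h
  have hcl := sft_closed hS
  have hpow : ∀ n : ℤ, ∀ s ∈ S, ((shiftE (Fin N)) ^ n) s ∈ S ∧
      φ (((shiftE (Fin N)) ^ n) s) = (f ^ n) (φ s) := by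
    intro n
    induction n using Int.induction_on with
    | zero => intro s hs; simpa using hs
    | succ k ih =>
      intro s hs
      obtain ⟨h1, h2⟩ := ih _ (hinv.1 s hs)
      rw [zpow_add_one, zpow_add_one, Equiv.Perm.mul_apply, Equiv.Perm.mul_apply]
      exact ⟨h1, by rw [h2, hφf s hs]⟩
    | pred k ih =>
      intro s hs
      have hs' : (shiftE (Fin N))⁻¹ s ∈ S := hinv.2 s hs
      obtain ⟨h1, h2⟩ := ih _ hs'
      rw [zpow_sub_one, zpow_sub_one, Equiv.Perm.mul_apply, Equiv.Perm.mul_apply]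
      refine ⟨h1, ?_⟩
      rw [h2]
      congr 1
      rw [Equiv.Perm.eq_inv_iff_eq, ← hφf _ hs']
      simp
  intro ε hε
  obtain ⟨l, hl⟩ := sft_splice hS
  obtain ⟨k, hk⟩ := sft_modulus hcl hφc hε
  set m : ℕ := max l k with hm
  let J : Finset ℤ := Finset.Icc (-(m : ℤ)) m
  refine ⟨J → Fin N, inferInstance,
    fun w => φ '' (S ∩ {s | ∀ j : J, s j = w j}), fun w => ?_, fun y => ?_, ?_⟩
  · refine IsCompact.isClosed (IsCompact.image_of_continuousOn (IsClosed.isCompact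
      (hcl.inter ?_)) (hφc.mono inter_subset_left))
    have : {s : ℤ → Fin N | ∀ j : J, s j = w j} = ⋂ j : J, {s | s j = w j} := by
      ext; simp
    rw [this]
    exact isClosed_iInter fun j => (eval_clopen _ _).isClosed
  · obtain ⟨s, hs, rfl⟩ : y ∈ φ '' S := by rw [hφs]; trivial
    exact ⟨fun j => s j, s, ⟨hs, fun _ => rfl⟩, rfl⟩
  · rintro w _ ⟨s, ⟨hs, hsw⟩, rfl⟩ _ ⟨t, ⟨ht, htw⟩, rfl⟩
    have hst : ∀ j : ℤ, -(m : ℤ) ≤ j → j ≤ m → s j = t j := fun j h1 h2 => by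
      have hj : j ∈ J := Finset.mem_Icc.2 ⟨h1, h2⟩
      exact (hsw ⟨j, hj⟩).trans (htw ⟨j, hj⟩).symm
    have hlm : l ≤ m := le_max_left _ _
    have hkm : k ≤ m := le_max_right _ _
    have hv := hl s hs t ht fun j h1 h2 => hst j (by omega) (by omega)
    set v : ℤ → Fin N := fun j => if j < 0 then t j else s j with hvdef
    refine ⟨φ v, fun n => ?_, fun n => ?_⟩
    · rw [← (hpow n s hs).2, ← (hpow n v hv).2]
      refine hk _ (hpow n s hs).1 _ (hpow n v hv).1 fun j hj => ?_
      have hj := abs_le.1 hj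
      rw [shift_zpow, shift_zpow, hvdef]
      by_cases h : j + (n : ℤ) < 0
      · simp only [h, if_true]
        exact hst _ (by omega) (by omega)
      · simp only [h, if_false]
    · rw [← (hpow _ t ht).2, ← (hpow _ v hv).2]
      refine hk _ (hpow _ t ht).1 _ (hpow _ v hv).1 fun j hj => ?_
      have hj := abs_le.1 hj
      rw [shift_zpow, shift_zpow, hvdef]
      by_cases h : j + -(n : ℤ) < 0
      · simp only [h, if_true]
      · simp only [h, if_false]
        exact (hst _ (by omega) (by omega)).symm


/-! ### Generic points -/

lemma trans_ge {Y : Type*} [MetricSpace Y] {f : Equiv.Perm Y} (hf : Continuous f)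
    (hf' : Continuous f.symm) (ht : TopTransitive f) {U V : Set Y} (hU : IsOpen U) (hV : IsOpen V)
    (hUn : U.Nonempty) (hVn : V.Nonempty) (N : ℕ) :
    ∃ n : ℕ, N ≤ n ∧ ∃ v ∈ V, (f ^ (n : ℤ)) v ∈ U := by
  have hV' : IsOpen ((f ^ (-(N : ℤ))) ⁻¹' V) := hV.preimage (cont_zpow hf hf' _)
  obtain ⟨v, hv⟩ := hVn
  obtain ⟨n, w, hw1, hw2⟩ := ht U _ hU hV' hUn ⟨(f ^ (N : ℤ)) v, by
    rw [mem_preimage, zinv']; exact hv⟩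
  refine ⟨n + N, by omega, _, hw2, ?_⟩
  rw [← zadd]
  push_cast
  rw [add_neg_cancel_right]
  exact hw1

lemma gen_dense {Y : Type*} [MetricSpace Y] [CompactSpace Y] {f : Equiv.Perm Y}
    (hf : Continuous f) (hf' : Continuous f.symm) (ht : TopTransitive f) :
    Dense {y | IsGen f y} := by
  let B := TopologicalSpace.countableBasis Y
  have hB := TopologicalSpace.isBasis_countableBasis Y
  have hcount : B.Countable := TopologicalSpace.countable_countableBasis Y
  have : Countable B := hcount.to_subtype
  have h1 : Dense (⋂ p : B × ℕ, ⋃ n : ℕ, ⋃ _ : p.2 ≤ n,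
      ((f ^ (-(n : ℤ))) ⁻¹' (p.1 : Set Y))) := by
    refine dense_iInter_of_isOpen (fun p => ?_) (fun p => ?_)
    · exact isOpen_iUnion fun n => isOpen_iUnion fun _ =>
        (hB.isOpen p.1.2).preimage (cont_zpow hf hf' _)
    · rw [dense_iff_inter_open]
      intro V hV hVn
      have hne : (p.1 : Set Y).Nonempty := TopologicalSpace.nonempty_of_mem_countableBasis p.1.2
      obtain ⟨n, hn, v, hv, hv'⟩ := trans_ge hf hf' ht hV (hB.isOpen p.1.2) hVn hne p.2
      refine ⟨_, hv', ?_⟩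
      simp only [mem_iUnion]
      exact ⟨n, hn, by rw [mem_preimage, zinv']; exact hv⟩
  refine h1.mono fun y hy U hU hUn N => ?_
  obtain ⟨x, hx⟩ := hUn
  obtain ⟨W, hW, -, hWU⟩ := hB.exists_subset_of_mem_open hx hU
  have := mem_iInter.1 hy (⟨W, hW⟩, N)
  simp only [mem_iUnion] at this
  obtain ⟨n, hn, h⟩ := this
  exact ⟨n, hn, hWU h⟩

lemma gen_zpow {Y : Type*} [TopologicalSpace Y] {f : Equiv.Perm Y} {y : Y} (hy : IsGen f y)
    (m : ℤ) : IsGen f ((f ^ m) y) := by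
  intro U hU hUn N
  obtain ⟨n, hn, h⟩ := hy U hU hUn (N + m.natAbs)
  refine ⟨(n + m).toNat, by omega, ?_⟩
  rw [← zadd]
  have : -((n + m).toNat : ℤ) + m = -(n : ℤ) := by omega
  rwa [this]

lemma gen_asymp {Y : Type*} [MetricSpace Y] {f : Equiv.Perm Y} {y w : Y} (hy : IsGen f y)
    (h : ∀ ε > 0, ∃ N : ℕ, ∀ n : ℕ, N ≤ n → dist ((f ^ (-(n : ℤ))) y) ((f ^ (-(n : ℤ))) w) < ε) :
    IsGen f w := by
  intro U hU hUn N
  obtain ⟨q, hq⟩ := hUn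
  obtain ⟨η, hη, hb⟩ := Metric.isOpen_iff.1 hU q hq
  obtain ⟨N', hN'⟩ := h (η / 2) (by linarith)
  obtain ⟨n, hn, hy'⟩ := hy _ (Metric.isOpen_ball (x := q) (ε := η / 2))
    ⟨q, Metric.mem_ball_self (by linarith)⟩ (max N N')
  refine ⟨n, by omega, hb ?_⟩
  rw [Metric.mem_ball] at *
  have := hN' n (by omega)
  have := dist_triangle_left ((f ^ (-(n : ℤ))) w) q ((f ^ (-(n : ℤ))) y)
  linarith

lemma decide_open {Y I : Type*} [TopologicalSpace Y] [Nonempty Y] [Fintype I] (K : I → Set Y)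
    (hK : ∀ i, IsClosed (K i)) :
    ∃ O : Set Y, IsOpen O ∧ O.Nonempty ∧ ∀ i, O ⊆ K i ∨ ∀ y ∈ O, y ∉ K i := by
  classical
  suffices ∀ s : Finset I, ∃ O : Set Y, IsOpen O ∧ O.Nonempty ∧
      ∀ i ∈ s, O ⊆ K i ∨ ∀ y ∈ O, y ∉ K i by
    obtain ⟨O, h1, h2, h3⟩ := this Finset.univ
    exact ⟨O, h1, h2, fun i => h3 i (Finset.mem_univ i)⟩
  intro s
  induction s using Finset.induction_on with
  | empty => exact ⟨univ, isOpen_univ, univ_nonempty, by simp⟩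
  | insert i s _ ih =>
    obtain ⟨O, h1, h2, h3⟩ := ih
    by_cases h : O ⊆ K i
    · refine ⟨O, h1, h2, fun j hj => ?_⟩
      rcases Finset.mem_insert.1 hj with rfl | hj
      · exact Or.inl h
      · exact h3 j hj
    · obtain ⟨y, hy, hyK⟩ := not_subset.1 h
      refine ⟨O ∩ (K i)ᶜ, h1.inter (hK i).isOpen_compl, ⟨y, hy, hyK⟩, fun j hj => ?_⟩
      rcases Finset.mem_insert.1 hj with rfl | hj
      · exact Or.inr fun z hz => hz.2
      · rcases h3 j hj with h4 | h4
        · exact Or.inl (inter_subset_left.trans h4)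
        · exact Or.inr fun z hz => h4 z hz.1

/-- The dynamics on generic points. -/
def genPerm {Y : Type*} [TopologicalSpace Y] (f : Equiv.Perm Y) : Equiv.Perm (Gen f) where
  toFun a := ⟨f a.pt, by simpa using gen_zpow a.gen 1⟩
  invFun a := ⟨f.symm a.pt, by simpa using gen_zpow a.gen (-1)⟩
  left_inv a := by cases a; simp
  right_inv a := by cases a; simp

lemma genPerm_zpow {Y : Type*} [TopologicalSpace Y] (f : Equiv.Perm Y) (n : ℤ) (a : Gen f) :
    ((genPerm f ^ n) a).pt = (f ^ n) a.pt :=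
  semiconj_zpow (α := Gen.pt) (fun _ => rfl) n a

/-! ### The properties of the extended metric -/

lemma HB_u {Y : Type*} [MetricSpace Y] {f : Equiv.Perm Y} {c ρ r δ₀ : ℝ} (C : Cst f c ρ r δ₀)
    {δ η : ℝ} (hδ : 0 < δ) (hη : η ≤ r) {p q : Y} (h : q ∈ Wu f (ρ / 4) p) : HB f ρ δ η p q := by
  intro u hu hd
  have := C.hρ
  exact ⟨u, Ws_self hδ u, Wu_trans (Wu_symm h) (C.small _ _ hu (by linarith)) (by linarith)⟩

lemma ext_totallyBounded {Y : Type*} [MetricSpace Y] [CompactSpace Y] {f : Equiv.Perm Y}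
    {c ρ r δ₀ : ℝ} (C : Cst f c ρ r δ₀) (hR : RectCover f) {ε : ℝ} (hε : 0 < ε) :
    ∃ (β : Type) (_ : Finite β) (col : Y → β), ∀ y y', col y = col y' → RelV f ρ r ε y y' := by
  have hρ := C.hρ
  obtain ⟨I, hI, K, hK, hcov, hbr⟩ := hR (min (ε / 2) (ρ / 4)) (lt_min (by linarith) (by linarith))
  choose idx hidx using hcov
  let E : Y → I → Prop := fun y i => ∃ p ∈ K i, p ∈ Wu f (ρ / 4) y
  have half : ∀ y y', E y = E y' → HB f ρ ε (r - 2 * ε) y y' := by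
    intro y y' h z hz hd
    have hz' := C.small _ _ hz (by linarith)
    have h1 : E y (idx z) := ⟨z, hidx z, hz'⟩
    rw [h] at h1
    obtain ⟨p, hp, hpy⟩ := h1
    obtain ⟨w, hw1, hw2⟩ := hbr _ z (hidx z) p hp
    have m1 := min_le_left (ε / 2) (ρ / 4)
    have m2 := min_le_right (ε / 2) (ρ / 4)
    exact ⟨w, Ws_mono (by linarith) hw1, Wu_trans hpy hw2 (by linarith)⟩
  let m : ℕ := ⌈1 / ε⌉₊
  let J : Finset ℤ := Finset.Icc (-(m : ℤ)) m
  refine ⟨J → (I → Prop) × I, inferInstance, fun y j => (E ((f ^ (j : ℤ)) y), idx ((f ^ (j : ℤ)) y)),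
    fun y y' h n hn => ?_⟩
  have hm' : |n| ≤ (m : ℤ) := by
    have e1 : |(n : ℝ)| ≤ 1 / ε := by rwa [le_div_iff₀ hε]
    have e2 := e1.trans (Nat.le_ceil (1 / ε))
    exact_mod_cast e2
  have hJ : n ∈ J := Finset.mem_Icc.2 (abs_le.1 hm')
  have h1 := congrFun h ⟨n, hJ⟩
  simp only [Prod.mk.injEq] at h1
  refine ⟨?_, half _ _ h1.1, half _ _ h1.1.symm⟩
  obtain ⟨w, hw1, hw2⟩ := hbr _ _ (hidx ((f ^ n) y)) ((f ^ n) y') (by rw [h1.2]; exact hidx _)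
  have m1 := min_le_left (ε / 2) (ρ / 4)
  have := dist_triangle_right ((f ^ n) y) ((f ^ n) y') w
  linarith [Ws_dist hw1, Wu_dist hw2]

lemma ext_bracket {Y : Type*} [MetricSpace Y] [CompactSpace Y] {f : Equiv.Perm Y}
    {c ρ r δ₀ : ℝ} (C : Cst f c ρ r δ₀) {ε : ℝ} (hε : 0 < ε) :
    ∃ δ > 0, ∀ y y' : Y, RelV f ρ r δ y y' → ∃ w, w ∈ Wu f ρ y' ∧ ∀ n : ℕ,
      RelV f ρ r ε ((f ^ (n : ℤ)) y) ((f ^ (n : ℤ)) w) ∧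
      RelV f ρ r ε ((f ^ (-(n : ℤ))) y') ((f ^ (-(n : ℤ))) w) := by
  have hρ := C.hρ
  have hρc := C.hρc
  have hr := C.hr
  have hδ₀ := C.hδ
  have hδr := C.hδr
  have hδρ := C.hδρ
  obtain ⟨M, γ, hγ, H⟩ := RelV_of_back C (η := r / 4) (by linarith) le_rfl hε
  obtain ⟨τ, hτ, hτγ, hτδ⟩ : ∃ τ > 0, τ ≤ γ / 2 ∧ τ ≤ δ₀ / 2 :=
    ⟨min (γ / 2) (δ₀ / 2), lt_min (by linarith) (by linarith), min_le_left _ _, min_le_right _ _⟩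
  obtain ⟨r₁, hr₁, hsm⟩ := small_u C.cont C.cont' C.exp hτ
  obtain ⟨r₂, hr₂, hmod⟩ := unif_mod C.cont C.cont' M hγ
  obtain ⟨δ, hδ, h1, h2, h3, h4⟩ : ∃ δ > 0, 2 * δ ≤ r₁ ∧ 2 * δ ≤ r₂ ∧ δ ≤ τ ∧ M * δ ≤ 1 := by
    have hM : (0 : ℝ) < M + 1 := by positivity
    refine ⟨min (min (r₁ / 2) (r₂ / 2)) (min τ (1 / (M + 1))), ?_, ?_, ?_, ?_, ?_⟩
    · refine lt_min (lt_min (by linarith) (by linarith)) (lt_min hτ (by positivity))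
    · have := (min_le_left (min (r₁ / 2) (r₂ / 2)) (min τ (1 / (M + 1 : ℝ)))).trans
        (min_le_left _ _)
      linarith
    · have := (min_le_left (min (r₁ / 2) (r₂ / 2)) (min τ (1 / (M + 1 : ℝ)))).trans
        (min_le_right _ _)
      linarith
    · exact (min_le_right _ _).trans (min_le_left _ _)
    · have h := (min_le_right (min (r₁ / 2) (r₂ / 2)) (min τ (1 / (M + 1 : ℝ)))).trans
        (min_le_right _ _)
      rw [le_div_iff₀ hM] at h
      have h0 : 0 < min (min (r₁ / 2) (r₂ / 2)) (min τ (1 / (M + 1 : ℝ))) :=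
        lt_min (lt_min (by linarith) (by linarith)) (lt_min hτ (by positivity))
      nlinarith
  refine ⟨δ, hδ, fun y y' hV => ?_⟩
  obtain ⟨d0, b0, -⟩ := hV 0 (by simp)
  simp only [zpow_zero, Equiv.Perm.coe_one, id] at d0 b0
  obtain ⟨w, hws, hwu⟩ := b0 y (Wu_self hρ y) (by rw [dist_self]; linarith)
  have hd : dist y' w < 2 * δ := by
    have := dist_triangle_left y' w y
    linarith [Ws_dist hws]
  have hwτ : w ∈ Wu f τ y' := hsm _ _ (Wu_mono (by linarith) hwu) (by linarith)
  have hw4 : w ∈ Wu f (ρ / 4) y' := Wu_mono (by linarith) hwτ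
  refine ⟨w, hwu, fun n => ⟨?_, ?_⟩⟩
  · obtain ⟨dM, bM, bM'⟩ := hV (-(M : ℤ)) (by simpa using h4)
    have uM := Wu_back hw4 (m := -(M : ℤ)) (by omega)
    have dM' := Wu_z hwτ (m := -(M : ℤ)) (by omega)
    have B1 := HB_trans dM bM (HB_u C hτ (by linarith : r - 2 * τ ≤ r) uM) hτ
    have B2 := HB_trans (by rwa [dist_comm] at dM')
      (HB_u C hτ (by linarith : r - 2 * τ ≤ r) (Wu_symm uM)) bM' hδ
    have e : -((n : ℤ) + M) + n = -(M : ℤ) := by ring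
    refine H _ _ (n + M) (by omega) ?_ ?_ fun j hj hj' => ?_
    · rw [← zadd, ← zadd, e]
      exact HB_mono B1 (by linarith) (by linarith)
    · rw [← zadd, ← zadd, e]
      exact HB_mono B2 (by linarith) (by linarith)
    · rw [← zadd, ← zadd]
      rcases le_or_gt 0 (j + (n : ℤ)) with h0 | h0
      · have := Ws_z hws h0
        linarith
      · have e1 := (hV (j + (n : ℤ)) (by
          have e2 : |j + (n : ℤ)| ≤ M := by rw [abs_le]; omega
          have e3 : |((j + (n : ℤ) : ℤ) : ℝ)| ≤ M := by exact_mod_cast e2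
          nlinarith)).1
        have e4 := Wu_z hwτ h0.le
        have := dist_triangle ((f ^ (j + (n : ℤ))) y) ((f ^ (j + (n : ℤ))) y')
          ((f ^ (j + (n : ℤ))) w)
        linarith
  · have uM := Wu_back (Wu_back hw4 (m := -(n : ℤ)) (by omega)) (m := -(M : ℤ)) (by omega)
    refine H _ _ M le_rfl (HB_u C hδ₀ (by linarith) uM) (HB_u C hδ₀ (by linarith) (Wu_symm uM))
      fun j hj hj' => ?_
    rw [← zadd, ← zadd]
    rcases le_or_gt (j + -(n : ℤ)) 0 with h0 | h0
    · have := Wu_z hwτ h0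
      linarith
    · exact hmod _ _ (by linarith) _ (by rw [abs_le]; omega)

/-- Near a generic point, closeness in `Y` of the backward orbit gives closeness upstairs. -/
lemma ext_open {Y : Type*} [MetricSpace Y] [CompactSpace Y] [Nonempty Y] {f : Equiv.Perm Y}
    {c ρ r δ₀ : ℝ} (C : Cst f c ρ r δ₀) (hR : RectCover f) {ε : ℝ} (hε : 0 < ε) :
    ∀ y, IsGen f y → ∃ (n : ℕ) (V : Set Y), IsOpen V ∧ V.Nonempty ∧
      ∀ v ∈ V, RelV f ρ r ε ((f ^ (n : ℤ)) v) y := by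
  have hρ := C.hρ
  have hr := C.hr
  have hδρ := C.hδρ
  obtain ⟨I, hI, K, hK, hcov, hbr⟩ := hR δ₀ C.hδ
  obtain ⟨O, hO, ⟨q, hq⟩, hdec⟩ := decide_open K hK
  obtain ⟨i, hi⟩ := hcov q
  have hOK : O ⊆ K i := (hdec i).resolve_right fun h => h q hq hi
  obtain ⟨η', hη', hb⟩ := Metric.isOpen_iff.1 hO q hq
  obtain ⟨η, hη, hηr, hη2⟩ : ∃ η > 0, η ≤ r / 4 ∧ 2 * η ≤ η' :=
    ⟨min (r / 4) (η' / 2), lt_min (by linarith) (by linarith), min_le_left _ _, by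
      linarith [min_le_right (r / 4) (η' / 2)]⟩
  have hB : ∀ a ∈ Metric.ball q η, ∀ b ∈ Metric.ball q η, HB f ρ δ₀ η a b := by
    intro a ha b hb' u hu hd
    rw [Metric.mem_ball] at ha hb'
    have h1 : u ∈ K i := hOK (hb (by
      rw [Metric.mem_ball]
      have := dist_triangle_left u q a
      linarith))
    have h2 : b ∈ K i := hOK (hb (by rw [Metric.mem_ball]; linarith))
    obtain ⟨w, hw1, hw2⟩ := hbr i u h1 b h2
    exact ⟨w, hw1, Wu_mono (by linarith) hw2⟩
  obtain ⟨M, γ, hγ, H⟩ := RelV_of_back C hη hηr hε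
  intro y hy
  obtain ⟨n, hn, hyn⟩ := hy (Metric.ball q η) Metric.isOpen_ball ⟨q, Metric.mem_ball_self hη⟩ M
  obtain ⟨κ, hκ, hmod⟩ := unif_mod C.cont C.cont' (n + M) hγ
  refine ⟨n, Metric.ball q η ∩ Metric.ball ((f ^ (-(n : ℤ))) y) κ,
    Metric.isOpen_ball.inter Metric.isOpen_ball, ⟨_, hyn, Metric.mem_ball_self hκ⟩, ?_⟩
  rintro v ⟨hv1, hv2⟩
  refine H _ _ n (by omega) ?_ ?_ fun j hj hj' => ?_
  · rw [zinv']; exact hB _ hv1 _ hyn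
  · rw [zinv']; exact hB _ hyn _ hv1
  · have := hmod v _ hv2 (j + n) (by rw [abs_le]; push_cast; omega)
    rw [← zadd] at this ⊢
    rwa [show j + n + -(n : ℤ) = j by ring] at this

lemma gen_transitive {Y : Type*} [MetricSpace Y] [CompactSpace Y] [Nonempty Y] {f : Equiv.Perm Y}
    {c ρ r δ₀ : ℝ} (C : Cst f c ρ r δ₀) (hR : RectCover f) (ht : TopTransitive f) {ε : ℝ}
    (hε : 0 < ε) (y y' : Y) (hy : IsGen f y) (hy' : IsGen f y') :
    ∃ (w : Y) (n : ℕ), IsGen f w ∧ RelV f ρ r ε w y ∧ RelV f ρ r ε ((f ^ (n : ℤ)) w) y' := by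
  obtain ⟨n₁, V, hV, hVn, H1⟩ := ext_open C hR hε y hy
  obtain ⟨n₂, U, hU, hUn, H2⟩ := ext_open C hR hε y' hy'
  obtain ⟨e, he, v, hv, hvU⟩ := trans_ge C.cont C.cont' ht hU hV hUn hVn n₁
  have hO : IsOpen (V ∩ (f ^ (e : ℤ)) ⁻¹' U) :=
    hV.inter (hU.preimage (cont_zpow C.cont C.cont' _))
  obtain ⟨x, ⟨hxV, hxU⟩, hxg⟩ := (gen_dense C.cont C.cont' ht).inter_open_nonempty _ hO ⟨v, hv, hvU⟩
  refine ⟨(f ^ (n₁ : ℤ)) x, n₂ + e - n₁, gen_zpow hxg _, H1 x hxV, ?_⟩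
  have := H2 _ hxU
  rw [← zadd] at this ⊢
  have e1 : ((n₂ + e - n₁ : ℕ) : ℤ) + n₁ = n₂ + e := by omega
  rwa [e1]


/-! ### The universal property -/

lemma unstable_of_le {X : Type*} [MetricSpace X] [CompactSpace X] {G : Equiv.Perm X} {c : ℝ}
    (hG : Continuous G) (hG' : Continuous G.symm) (he : Expansive G c) {x w : X}
    (h : ∀ n : ℕ, 1 ≤ n → dist ((G ^ (-(n : ℤ))) x) ((G ^ (-(n : ℤ))) w) ≤ c) :
    w ∈ unstableSet G x := by
  show Tendsto _ _ _
  rw [Metric.tendsto_atTop]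
  intro ε hε
  obtain ⟨N, hN⟩ := contr_u hG hG' he hε
  refine ⟨N, fun n hn => ?_⟩
  rw [Real.dist_eq, sub_zero, abs_of_nonneg dist_nonneg]
  exact hN x w h n hn

lemma self_unstable {X : Type*} [MetricSpace X] (G : Equiv.Perm X) (x : X) :
    x ∈ unstableSet G x := by
  show Tendsto _ _ _
  simp

lemma res_step {X Y : Type*} [MetricSpace X] [CompactSpace X] [MetricSpace Y] {G : Equiv.Perm X}
    {c : ℝ} (hG : Continuous G) (hG' : Continuous G.symm) (he : Expansive G c) {α : X → Y}
    (hα : Continuous α) (hu : UResolving G α) {ε : ℝ} (hε : 0 < ε) (hεc : ε ≤ c) :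
    ∃ η > 0, ∀ x w : X, (∀ n : ℕ, 1 ≤ n → dist ((G ^ (-(n : ℤ))) x) ((G ^ (-(n : ℤ))) w) ≤ ε) →
      dist (α x) (α w) < η → dist x w < ε := by
  let S : Set (X × X) := {p | ε ≤ dist p.1 p.2} ∩
    ⋂ n : ℕ, ⋂ _ : 1 ≤ n, {p | dist ((G ^ (-(n : ℤ))) p.1) ((G ^ (-(n : ℤ))) p.2) ≤ ε}
  have hS : IsCompact S := by
    apply IsClosed.isCompact
    apply IsClosed.inter (isClosed_le continuous_const (by fun_prop))
    refine isClosed_iInter fun n => isClosed_iInter fun _ => isClosed_le ?_ continuous_const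
    have := cont_zpow hG hG' (-(n : ℤ))
    fun_prop
  have hmem : ∀ x w : X, ε ≤ dist x w →
      (∀ n : ℕ, 1 ≤ n → dist ((G ^ (-(n : ℤ))) x) ((G ^ (-(n : ℤ))) w) ≤ ε) → (x, w) ∈ S := by
    intro x w h1 h2
    exact ⟨h1, mem_iInter.2 fun n => mem_iInter.2 fun hn => h2 n hn⟩
  rcases S.eq_empty_or_nonempty with h0 | h0
  · refine ⟨1, one_pos, fun x w h _ => ?_⟩
    by_contra hn
    have := hmem x w (not_lt.1 hn) h
    rw [h0] at this
    exact this
  · obtain ⟨p, hp, hmin⟩ := hS.exists_isMinOn h0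
      (f := fun p : X × X => dist (α p.1) (α p.2)) (by fun_prop)
    refine ⟨dist (α p.1) (α p.2), ?_, fun x w h hd => ?_⟩
    · refine dist_pos.2 ?_
      intro heq
      have h1 : p.2 ∈ unstableSet G p.1 := unstable_of_le hG hG' he fun n hn =>
        (mem_iInter.1 (mem_iInter.1 hp.2 n) hn).trans hεc
      have h2 := hu p.1 (self_unstable G p.1) h1 heq
      have h3 : ε ≤ dist p.1 p.2 := hp.1
      rw [h2, dist_self] at h3
      linarith
    · by_contra hn
      have := hmin (hmem x w (not_lt.1 hn) h)
      simp only [mem_ofPred_eq] at this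
      linarith

lemma res_small {X Y : Type*} [MetricSpace X] [CompactSpace X] [MetricSpace Y] {G : Equiv.Perm X}
    {f : Equiv.Perm Y}
    {c : ℝ} (hG : Continuous G) (hG' : Continuous G.symm) (he : Expansive G c) {α : X → Y}
    (hα : Continuous α) (hαf : ∀ x, α (G x) = f (α x))
    (hu : UResolving G α) {ε : ℝ} (hε : 0 < ε) (hεc : ε ≤ c) :
    ∃ η > 0, ∀ x w : X, w ∈ unstableSet G x → α w ∈ Wu f η (α x) → w ∈ Wu G ε x := by
  obtain ⟨η, hη, H⟩ := res_step hG hG' he hα hu hε hεc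
  refine ⟨η, hη, fun x w hw h => ?_⟩
  have hw' : Tendsto (fun n : ℕ => dist ((G ^ (-(n : ℤ))) x) ((G ^ (-(n : ℤ))) w)) atTop
    (𝓝 0) := hw
  obtain ⟨N, hN⟩ := (hw'.eventually (gt_mem_nhds hε)).exists_forall_of_atTop
  have key : ∀ k : ℕ, ∀ n : ℕ, N ≤ n + k → dist ((G ^ (-(n : ℤ))) x) ((G ^ (-(n : ℤ))) w) < ε := by
    intro k
    induction k with
    | zero => exact fun n hn => hN n hn
    | succ k ih =>
      intro n hn
      apply H
      · intro m hm
        rw [← zadd, ← zadd]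
        have e : -(m : ℤ) + -(n : ℤ) = -((m + n : ℕ) : ℤ) := by push_cast; ring
        rw [e]
        exact (ih (m + n) (by omega)).le
      · rw [semiconj_zpow hαf, semiconj_zpow hαf]
        exact h n
  exact fun n => key N n (by omega)

lemma lift_unstable {X Y : Type*} [MetricSpace X] [CompactSpace X] [MetricSpace Y]
    [CompactSpace Y] {G : Equiv.Perm X} {f : Equiv.Perm Y} {c ρ r δ₀ : ℝ} (C : Cst f c ρ r δ₀)
    (hX : IsSmale G) {α : X → Y} (hα : IsFactorMap G f α) {x : X} (hx : IsGen f (α x)) {u : Y}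
    (hu : u ∈ Wu f ρ (α x)) : ∃ w ∈ unstableSet G x, α w = u := by
  obtain ⟨hG, hG', ⟨cX, hcX, he⟩, ε₀, hε₀, hcc⟩ := hX
  obtain ⟨hαc, hαs, hαf⟩ := hα
  have hρ := C.hρ
  have hρc := C.hρc
  have hun := CompactSpace.uniformContinuous_of_continuous hαc
  obtain ⟨ε', hε', hm⟩ := Metric.uniformContinuous_iff.1 hun ρ hρ
  let ε := min ε' (min ε₀ cX)
  have hε : 0 < ε := lt_min hε' (lt_min hε₀ hcX)
  have hεε' : ε ≤ ε' := min_le_left _ _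
  have hεε₀ : ε ≤ ε₀ := (min_le_right _ _).trans (min_le_left _ _)
  have hεc : ε ≤ cX := (min_le_right _ _).trans (min_le_right _ _)
  obtain ⟨δ, hδ, hbr⟩ := hcc ε hε hεε₀
  obtain ⟨t, -, htf, htc⟩ := finite_cover_balls_of_compact (isCompact_univ (X := X))
    (show 0 < δ / 3 by linarith)
  have := htf.fintype
  have : Nonempty Y := ⟨u⟩
  obtain ⟨O, hO, ⟨q, hq⟩, hdec⟩ := decide_open
    (fun i : t => α '' Metric.closedBall (i : X) (δ / 3))
    (fun i => (Metric.isClosed_closedBall.isCompact.image hαc).isClosed)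
  obtain ⟨η, hη, hball⟩ := Metric.isOpen_iff.1 hO q hq
  obtain ⟨N, hN⟩ := contr_u C.cont C.cont' C.exp (half_pos hη)
  obtain ⟨n, hn, hnq⟩ := hx _ (Metric.isOpen_ball (x := q) (ε := η / 2))
    ⟨q, Metric.mem_ball_self (by linarith)⟩ N
  have h1 := hN _ _ (fun k _ => ((hu k).le.trans (by linarith : ρ ≤ c))) n hn
  rw [Metric.mem_ball] at hnq
  have hOx : (f ^ (-(n : ℤ))) (α x) ∈ O := hball (by rw [Metric.mem_ball]; linarith)
  have hOu : (f ^ (-(n : ℤ))) u ∈ O := hball (by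
    rw [Metric.mem_ball]
    have := dist_triangle ((f ^ (-(n : ℤ))) u) ((f ^ (-(n : ℤ))) (α x)) q
    rw [dist_comm ((f ^ (-(n : ℤ))) u) ((f ^ (-(n : ℤ))) (α x))] at this
    linarith)
  have hcov := htc (mem_univ ((G ^ (-(n : ℤ))) x))
  simp only [mem_iUnion] at hcov
  obtain ⟨i, hit, hi⟩ := hcov
  have hi' := Metric.ball_subset_closedBall hi
  obtain ⟨x', hx', hx'u⟩ : (f ^ (-(n : ℤ))) u ∈ α '' Metric.closedBall i (δ / 3) := by
    rcases hdec ⟨i, hit⟩ with h | h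
    · exact h hOu
    · exact absurd ⟨_, hi', semiconj_zpow hαf _ _⟩ (h _ hOx)
  have hd : dist x' ((G ^ (-(n : ℤ))) x) < δ := by
    have := dist_triangle_right x' ((G ^ (-(n : ℤ))) x) i
    rw [Metric.mem_closedBall] at hx' hi'
    linarith
  obtain ⟨w, ⟨hws, hwu⟩, -⟩ := hbr _ _ hd
  have hw : α w = (f ^ (-(n : ℤ))) u := by
    rw [← hx'u]
    apply bracket_unique C.exp
    · intro k
      rw [← semiconj_zpow hαf, ← semiconj_zpow hαf, dist_comm]
      exact ((hm ((hws k).trans_le hεε')).le).trans (by linarith)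
    · intro k
      rw [hx'u]
      have e1 : dist ((f ^ (-(k : ℤ))) (α w)) ((f ^ (-(k : ℤ))) ((f ^ (-(n : ℤ))) (α x))) < ρ := by
        rw [← semiconj_zpow hαf, ← semiconj_zpow hαf, ← semiconj_zpow hαf, dist_comm]
        exact hm ((hwu k).trans_le hεε')
      have e2 := Wu_back hu (m := -(n : ℤ)) (by omega) k
      linarith [dist_triangle ((f ^ (-(k : ℤ))) (α w)) ((f ^ (-(k : ℤ))) ((f ^ (-(n : ℤ))) (α x)))
        ((f ^ (-(k : ℤ))) ((f ^ (-(n : ℤ))) u))]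
  refine ⟨(G ^ (n : ℤ)) w, ?_, by rw [semiconj_zpow hαf, hw, zinv]⟩
  have hwun : w ∈ unstableSet G ((G ^ (-(n : ℤ))) x) := unstable_of_le hG hG' he
    fun k _ => (hwu k).le.trans hεc
  show Tendsto _ _ _
  rw [← tendsto_add_atTop_iff_nat n]
  refine Tendsto.congr (fun k => ?_) hwun
  rw [← zadd, ← zadd]
  congr 3 <;> push_cast <;> ring

lemma lift_small {X Y : Type*} [MetricSpace X] [CompactSpace X] [MetricSpace Y]
    [CompactSpace Y] {G : Equiv.Perm X} {f : Equiv.Perm Y} {c ρ r δ₀ : ℝ} (C : Cst f c ρ r δ₀)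
    (hX : IsSmale G) {α : X → Y} (hα : IsFactorMap G f α) (hres : UResolving G α)
    {ε : ℝ} (hε : 0 < ε) :
    ∃ η > 0, ∀ x, IsGen f (α x) → ∀ u ∈ Wu f ρ (α x), dist (α x) u < η →
      ∃ w ∈ Wu G ε x, α w = u := by
  obtain ⟨cX, hcX, he⟩ := hX.2.2.1
  obtain ⟨η', hη', H⟩ := res_small hX.1 hX.2.1 he hα.1 hα.2.2 hres (lt_min hε hcX)
    (min_le_right _ _)
  obtain ⟨η, hη, H2⟩ := small_u C.cont C.cont' C.exp hη'
  have hρ := C.hρ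
  have hρc := C.hρc
  refine ⟨η, hη, fun x hx u hu hd => ?_⟩
  obtain ⟨w, hw, rfl⟩ := lift_unstable C hX hα hx hu
  exact ⟨w, Wu_mono (min_le_left _ _) (H x w hw (H2 _ _ (Wu_mono (by linarith) hu) hd)), rfl⟩

lemma lift_uniform {X Y : Type*} [MetricSpace X] [CompactSpace X] [MetricSpace Y]
    [CompactSpace Y] {G : Equiv.Perm X} {f : Equiv.Perm Y} {c ρ r δ₀ : ℝ} (C : Cst f c ρ r δ₀)
    (hX : IsSmale G) {α : X → Y} (hα : IsFactorMap G f α) (hres : UResolving G α)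
    {ε : ℝ} (hε : 0 < ε) :
    ∃ κ > 0, ∀ x x', IsGen f (α x) → IsGen f (α x') → dist x x' < κ →
      RelV f ρ r ε (α x) (α x') := by
  obtain ⟨ε₀, hε₀, hcc⟩ := hX.2.2.2
  have hδρ := C.hδρ
  have hρ := C.hρ
  have hr := C.hr
  have hun := Metric.uniformContinuous_iff.1 (CompactSpace.uniformContinuous_of_continuous hα.1)
  obtain ⟨ε', hε', hm⟩ := hun δ₀ C.hδ
  obtain ⟨δ, hδ, hbr⟩ := hcc (min ε' ε₀) (lt_min hε' hε₀) (min_le_right _ _)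
  obtain ⟨η, hη, hlift⟩ := lift_small C hX hα hres (half_pos hδ)
  have hη' : 0 < min η (r / 4) := lt_min hη (by linarith)
  obtain ⟨M, γ, hγ, hM⟩ := RelV_of_back C hη' (min_le_right _ _) hε
  obtain ⟨γ', hγ', hmγ⟩ := hun γ hγ
  obtain ⟨κ, hκ, hmod⟩ := unif_mod hX.1 hX.2.1 M (lt_min (half_pos hδ) hγ')
  have hHB : ∀ x x', IsGen f (α x) → dist x x' < δ / 2 →
      HB f ρ δ₀ (min η (r / 4)) (α x) (α x') := by
    intro x x' hx hd u hu hdu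
    obtain ⟨w, hw, rfl⟩ := hlift x hx u hu (hdu.trans_le (min_le_left _ _))
    have hwx : dist w x' < δ := by
      have := dist_triangle_left w x' x
      linarith [Wu_dist hw]
    obtain ⟨z, ⟨hzs, hzu⟩, -⟩ := hbr _ _ hwx
    refine ⟨α z, fun n => ?_, fun n => ?_⟩
    · rw [← semiconj_zpow hα.2.2, ← semiconj_zpow hα.2.2]
      exact hm ((hzs n).trans_le (min_le_left _ _))
    · rw [← semiconj_zpow hα.2.2, ← semiconj_zpow hα.2.2]
      exact (hm ((hzu n).trans_le (min_le_left _ _))).trans_le (by linarith)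
  refine ⟨κ, hκ, fun x x' hx hx' hd => ?_⟩
  have hsm := hmod x x' hd
  have hg : ∀ x, IsGen f (α x) → IsGen f (α ((G ^ (-(M : ℤ))) x)) := by
    intro x hx
    rw [semiconj_zpow hα.2.2]
    exact gen_zpow hx _
  have hback := (hsm (-(M : ℤ)) (by simp)).trans_le (min_le_left _ _)
  refine hM _ _ M le_rfl ?_ ?_ ?_
  · rw [← semiconj_zpow hα.2.2, ← semiconj_zpow hα.2.2]
    exact hHB _ _ (hg x hx) hback
  · rw [← semiconj_zpow hα.2.2, ← semiconj_zpow hα.2.2]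
    exact hHB _ _ (hg x' hx') (by rwa [dist_comm])
  · intro j h1 h2
    rw [← semiconj_zpow hα.2.2, ← semiconj_zpow hα.2.2]
    exact hmγ ((hsm j (abs_le.2 ⟨h1, h2⟩)).trans_le (min_le_right _ _))

lemma gen_image {X Y : Type*} [TopologicalSpace X] [TopologicalSpace Y] {G : Equiv.Perm X}
    {f : Equiv.Perm Y} {α : X → Y} (hα : Continuous α) (hs : Function.Surjective α)
    (hαf : ∀ x, α (G x) = f (α x)) {x : X} (hx : IsGen G x) : IsGen f (α x) := by
  intro U hU ⟨q, hq⟩ N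
  obtain ⟨p, rfl⟩ := hs q
  obtain ⟨n, hn, h⟩ := hx (α ⁻¹' U) (hU.preimage hα) ⟨p, hq⟩ N
  refine ⟨n, hn, ?_⟩
  rw [← semiconj_zpow hαf]
  exact h

theorem universal {X Y : Type*} [MetricSpace X] [CompactSpace X] [MetricSpace Y]
    [CompactSpace Y] {G : Equiv.Perm X} {f : Equiv.Perm Y} {Z : Type*} [MetricSpace Z]
    [CompactSpace Z] {g : Equiv.Perm Z} {π : Z → Y} (hg : Continuous g) (hπ : Continuous π)
    (e : Gen f → Z) (he : DenseRange e) (hge : ∀ a, g (e a) = e (genPerm f a))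
    (hπe : ∀ a, π (e a) = a.pt) (hG : Continuous G) (hG' : Continuous G.symm)
    (hGt : TopTransitive G) {α : X → Y} (hα : IsFactorMap G f α) (hres : UResolving G α)
    (hunif : ∀ ε > 0, ∃ κ > 0, ∀ x x', ∀ hx : IsGen f (α x), ∀ hx' : IsGen f (α x'),
      dist x x' < κ → dist (e ⟨α x, hx⟩) (e ⟨α x', hx'⟩) ≤ ε) :
    ∃ β : X → Z, IsFactorMap G g β ∧ UResolving G β ∧ α = π ∘ β := by
  let S : Set X := {x | IsGen f (α x)}
  have hS : Dense S := (gen_dense hG hG' hGt).mono fun x hx =>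
    gen_image hα.1 hα.2.1 hα.2.2 hx
  let b : S → Z := fun x => e ⟨α x, x.2⟩
  have hb : UniformContinuous b := by
    rw [Metric.uniformContinuous_iff]
    intro ε hε
    obtain ⟨κ, hκ, H⟩ := hunif (ε / 2) (by linarith)
    refine ⟨κ, hκ, fun {x x'} hd => (H x x' x.2 x'.2 hd).trans_lt (by linarith)⟩
  have hui : IsUniformInducing ((↑) : S → X) := isUniformEmbedding_subtype_val.isUniformInducing
  have hdr : DenseRange ((↑) : S → X) := hS.denseRange_val
  let β : X → Z := (hui.isDenseInducing hdr).extend b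
  have hβ : Continuous β := (uniformContinuous_uniformly_extend hui hdr hb).continuous
  have hβS : ∀ x : S, β x = b x := fun x =>
    uniformly_extend_of_ind hui hdr hb x
  have hαβ : α = π ∘ β := by
    refine Continuous.ext_on hS hα.1 (hπ.comp hβ) fun x hx => ?_
    simp only [Function.comp]
    rw [hβS ⟨x, hx⟩, hπe]
  have hβG : β ∘ G = g ∘ β := by
    refine Continuous.ext_on hS (hβ.comp hG) (hg.comp hβ) fun x hx => ?_
    have hx' : G x ∈ S := by
      show IsGen f _
      rw [hα.2.2]
      simpa using gen_zpow (f := f) hx 1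
    simp only [Function.comp]
    rw [hβS ⟨x, hx⟩, hβS ⟨G x, hx'⟩, hge]
    simp only [b]
    congr 1
    simp only [genPerm]
    congr 1
    exact hα.2.2 x
  refine ⟨β, ⟨hβ, ?_, fun x => congrFun hβG x⟩, fun x p hp q hq h => ?_, hαβ⟩
  · rw [← range_eq_univ]
    have hcl : IsClosed (range β) := (isCompact_range hβ).isClosed
    have hd : Dense (range β) := by
      refine Dense.mono ?_ he
      rintro _ ⟨a, rfl⟩
      obtain ⟨x, hx⟩ := hα.2.1 a.pt
      have hxS : x ∈ S := by
        show IsGen f _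
        rw [hx]; exact a.gen
      refine ⟨x, ?_⟩
      rw [hβS ⟨x, hxS⟩]
      simp only [b]
      congr 1
      cases a
      simp only at hx
      subst hx
      rfl
    rw [← hcl.closure_eq]
    exact hd.closure_eq
  · refine hres x hp hq ?_
    rw [hαβ]
    simp only [Function.comp, h]

/-! ### Assembling the extension -/

lemma RelV_shift {Y : Type*} [MetricSpace Y] {f : Equiv.Perm Y} {ρ r ε : ℝ} (hε : 0 < ε)
    {y y' : Y} (h : RelV f ρ r (ε / (1 + ε)) y y') {m : ℤ} (hm : |m| ≤ 1) :
    RelV f ρ r ε ((f ^ m) y) ((f ^ m) y') := by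
  have hle : ε / (1 + ε) ≤ ε := div_le_self hε.le (by linarith)
  have hp : 0 < ε / (1 + ε) := by positivity
  intro n hn
  rw [← zadd, ← zadd]
  have hm' : |(m : ℝ)| ≤ 1 := by exact_mod_cast hm
  obtain ⟨h1, h2, h3⟩ := h (n + m) (by
    push_cast
    calc |(n : ℝ) + m| * (ε / (1 + ε)) ≤ (|(n : ℝ)| + 1) * (ε / (1 + ε)) := by
          gcongr
          exact (abs_add_le _ _).trans (by linarith)
      _ = ((|(n : ℝ)| + 1) * ε) / (1 + ε) := by ring
      _ ≤ 1 := by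
          rw [div_le_one (by linarith)]
          linarith)
  exact ⟨h1.trans_le hle, HB_mono h2 hle (by linarith), HB_mono h3 hle (by linarith)⟩

theorem main {Y : Type} [MetricSpace Y] [CompactSpace Y] (f : Equiv.Perm Y)
    (hY : FinitelyPresented f) (hYt : TopTransitive f) :
    ∃ (Yp : Type) (mYp : MetricSpace Yp) (cYp : CompactSpace Yp)
      (g : Equiv.Perm Yp) (πp : Yp → Y),
      IsSmale g ∧ TopTransitive g ∧ IsFactorMap g f πp ∧ UResolving g πp ∧
      ∀ (X : Type) (mX : MetricSpace X) (cX : CompactSpace X)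
        (G : Equiv.Perm X) (α : X → Y),
        IsSmale G → TopTransitive G → IsFactorMap G f α → UResolving G α →
        ∃ β : X → Yp, IsFactorMap G g β ∧ UResolving G β ∧ α = πp ∘ β := by
  have hR := rectCover_of_fp hY
  obtain ⟨hf, hf', ⟨c, hc, he⟩, N, S, -, -, ⟨s, hs⟩, φ, -⟩ := hY
  have : Nonempty Y := ⟨φ s⟩
  obtain ⟨ρ, r, δ₀, C⟩ := Cst_exists hf hf' hc he
  have hρ := C.hρ
  have hρc := C.hρc
  have hr := C.hr
  have hδr := C.hδr
  letI := genMetric f ρ r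
  have dle : ∀ {ε : ℝ} {a b : Gen f}, 0 < ε → RelV f ρ r ε a.pt b.pt → dist a b ≤ ε :=
    fun hε h => dV_le hε h
  have hrel : ∀ {ε : ℝ} {a b : Gen f}, dist a b < ε → RelV f ρ r ε a.pt b.pt :=
    fun h => RelV_of_dV h
  have hTB : TotallyBounded (univ : Set (Gen f)) := by
    refine Metric.totallyBounded_of_finite_discretization fun ε hε => ?_
    obtain ⟨β, hβ, col, hcol⟩ := ext_totallyBounded C hR (half_pos hε)
    refine ⟨β, Fintype.ofFinite β, fun a => col a.1.pt, fun a b h => ?_⟩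
    exact (dle (half_pos hε) (hcol _ _ h)).trans_lt (by linarith)
  have hsh : ∀ m : ℤ, |m| ≤ 1 → UniformContinuous (genPerm f ^ m) := by
    intro m hm
    rw [Metric.uniformContinuous_iff]
    intro ε hε
    refine ⟨(ε / 2) / (1 + ε / 2), by positivity, fun {a b} h => ?_⟩
    have h1 := RelV_shift (half_pos hε) (hrel h) hm
    rw [← genPerm_zpow, ← genPerm_zpow] at h1
    exact (dle (half_pos hε) h1).trans_lt (by linarith)
  have hF : UniformContinuous (genPerm f) := by simpa using hsh 1 (by simp)
  have hF' : UniformContinuous (genPerm f).symm := by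
    have := hsh (-1) (by simp)
    rw [zpow_neg_one] at this
    exact this
  have hdense : DenseRange (Gen.pt : Gen f → Y) :=
    (gen_dense hf hf' hYt).mono fun y hy => ⟨⟨y, hy⟩, rfl⟩
  have H1 : ∀ ε > 0, ∃ M : ℕ, ∃ γ > 0, ∀ a b : Gen f, ∀ n : ℕ, M ≤ n →
      dist ((genPerm f ^ (-(n : ℤ))) a) ((genPerm f ^ (-(n : ℤ))) b) < δ₀ →
      (∀ j : ℤ, -(n : ℤ) ≤ j → j ≤ M → dist ((f ^ j) a.pt) ((f ^ j) b.pt) < γ) →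
      dist a b ≤ ε := by
    intro ε hε
    obtain ⟨M, γ, hγ, H⟩ := RelV_of_back C (show 0 < r / 4 by linarith) le_rfl hε
    refine ⟨M, γ, hγ, fun a b n hn hd hj => dle hε ?_⟩
    have h0 := hrel hd 0 (by simp)
    rw [genPerm_zpow, genPerm_zpow] at h0
    simp only [zpow_zero, Equiv.Perm.coe_one, id] at h0
    exact H _ _ n (by exact_mod_cast hn) (HB_mono h0.2.1 le_rfl (by linarith))
      (HB_mono h0.2.2 le_rfl (by linarith)) hj
  have H2 : ∀ ε > 0, ∃ δ > 0, ∀ a b : Gen f, dist a b < δ → ∃ w : Gen f, ∀ n : ℕ,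
      dist ((genPerm f ^ (n : ℤ)) a) ((genPerm f ^ (n : ℤ)) w) ≤ ε ∧
      dist ((genPerm f ^ (-(n : ℤ))) b) ((genPerm f ^ (-(n : ℤ))) w) ≤ ε := by
    intro ε hε
    obtain ⟨δ, hδ, H⟩ := ext_bracket C hε
    refine ⟨δ, hδ, fun a b hd => ?_⟩
    obtain ⟨w, hw, hwn⟩ := H _ _ (hrel hd)
    have hgen : IsGen f w := by
      refine gen_asymp b.gen fun ε hε => ?_
      obtain ⟨N, hN⟩ := contr_u hf hf' he hε
      exact ⟨N, hN _ _ fun n _ => (hw n).le.trans (by linarith)⟩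
    refine ⟨⟨w, hgen⟩, fun n => ⟨dle hε ?_, dle hε ?_⟩⟩
    · rw [genPerm_zpow, genPerm_zpow]; exact (hwn n).1
    · rw [genPerm_zpow, genPerm_zpow]; exact (hwn n).2
  have H3 : TopTransitive (genPerm f) := by
    intro U V hU hV ⟨u, hu⟩ ⟨v, hv⟩
    obtain ⟨ε₁, hε₁, hb1⟩ := Metric.isOpen_iff.1 hU u hu
    obtain ⟨ε₂, hε₂, hb2⟩ := Metric.isOpen_iff.1 hV v hv
    have hm : 0 < min ε₁ ε₂ / 2 := half_pos (lt_min hε₁ hε₂)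
    obtain ⟨w, n, hw, h1, h2⟩ := gen_transitive C hR hYt hm v.pt u.pt v.gen u.gen
    have e1 := min_le_left ε₁ ε₂
    have e2 := min_le_right ε₁ ε₂
    refine ⟨n, ⟨w, hw⟩, hb1 ?_, hb2 ?_⟩
    · rw [Metric.mem_ball]
      refine (dle hm ?_).trans_lt (by linarith)
      rw [genPerm_zpow]; exact h2
    · rw [Metric.mem_ball]
      exact (dle hm h1).trans_lt (by linarith)
  obtain ⟨hcomp, g, π, hS, hT, hfac, hres, hg, hπ⟩ := completion_smale hf hf' hc he (genPerm f)
    Gen.pt hTB hF hF' (fun a b => dist_le_dV f ρ r a.pt b.pt) (fun _ => rfl) hdense C.hδ H1 H2 H3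
  refine ⟨UniformSpace.Completion (Gen f), inferInstance, hcomp, g, π, hS, hT, hfac, hres, ?_⟩
  intro X mX cX G α hXS hXt hα hαr
  refine universal hS.1 hfac.1 (fun a : Gen f => (a : UniformSpace.Completion (Gen f)))
    UniformSpace.Completion.denseRange_coe hg hπ hXS.1 hXS.2.1 hXt hα hαr fun ε hε => ?_
  obtain ⟨κ, hκ, H⟩ := lift_uniform C hXS hα hαr hε
  refine ⟨κ, hκ, fun x x' hx hx' hd => ?_⟩
  rw [UniformSpace.Completion.dist_eq]
  exact dle hε (H x x' hx hx' hd)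

end FPS

/-- A transitive finitely presented system has a minimal transitive Smale
space extension among u-resolving extensions: every transitive Smale space u-resolving
extension factors through it by a u-resolving factor map. -/
theorem stmt7 {Y : Type} [MetricSpace Y] [CompactSpace Y] (f : Equiv.Perm Y)
    (hY : FinitelyPresented f) (hYt : TopTransitive f) :
    ∃ (Yp : Type) (mYp : MetricSpace Yp) (cYp : CompactSpace Yp)
      (g : Equiv.Perm Yp) (πp : Yp → Y),
      IsSmale g ∧ TopTransitive g ∧ IsFactorMap g f πp ∧ UResolving g πp ∧
      ∀ (X : Type) (mX : MetricSpace X) (cX : CompactSpace X)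
        (G : Equiv.Perm X) (α : X → Y),
        IsSmale G → TopTransitive G → IsFactorMap G f α → UResolving G α →
        ∃ β : X → Yp, IsFactorMap G g β ∧ UResolving G β ∧ α = πp ∘ β := by
  exact FPS.main f hY hYt
end

section
/- Let (X,f) and (Y,g) be transitive Smale spaces and π : X → Y a factor map that is both u-resolving and s-resolving. Then π is constant-to-one: there exists k ∈ ℕ such that every y ∈ Y has exactly k preimages. -/
open Filter Topology Set

section Helpers

variable {X Y : Type*} [MetricSpace X] [MetricSpace Y]

lemma hp_Wu_eq (f : Equiv.Perm X) (ε : ℝ) (x : X) : Wu f ε x = Ws f⁻¹ ε x := by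
  ext y; simp [Wu, Ws]

lemma hp_Ws_inv (f : Equiv.Perm X) (ε : ℝ) (x : X) : Wu f⁻¹ ε x = Ws f ε x := by
  rw [hp_Wu_eq, inv_inv]

lemma hp_unst_eq (f : Equiv.Perm X) (x : X) : unstableSet f x = stableSet f⁻¹ x := by
  ext y; simp [unstableSet, stableSet]

lemma hp_unst_inv (f : Equiv.Perm X) (x : X) : unstableSet f⁻¹ x = stableSet f x := by
  rw [hp_unst_eq, inv_inv]

lemma hp_Ws_symm {f : Equiv.Perm X} {ε : ℝ} {x y : X} (h : y ∈ Ws f ε x) : x ∈ Ws f ε y := by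
  intro n; rw [dist_comm]; exact h n

lemma hp_Ws_mono {f : Equiv.Perm X} {ε ε' : ℝ} (hε : ε ≤ ε') {x y : X} (h : y ∈ Ws f ε x) :
    y ∈ Ws f ε' x := fun n => (h n).trans_le hε

lemma hp_Ws_dist {f : Equiv.Perm X} {ε : ℝ} {x y : X} (h : y ∈ Ws f ε x) : dist x y < ε := by
  simpa using h 0

lemma hp_Wu_symm {f : Equiv.Perm X} {ε : ℝ} {x y : X} (h : y ∈ Wu f ε x) : x ∈ Wu f ε y := by
  rw [hp_Wu_eq] at *; exact hp_Ws_symm h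

lemma hp_Wu_mono {f : Equiv.Perm X} {ε ε' : ℝ} (hε : ε ≤ ε') {x y : X} (h : y ∈ Wu f ε x) :
    y ∈ Wu f ε' x := by
  rw [hp_Wu_eq] at *; exact hp_Ws_mono hε h

lemma hp_Wu_dist {f : Equiv.Perm X} {ε : ℝ} {x y : X} (h : y ∈ Wu f ε x) : dist x y < ε := by
  rw [hp_Wu_eq] at *; exact hp_Ws_dist h

lemma hp_exp_inv {f : Equiv.Perm X} {c : ℝ} (h : Expansive f c) : Expansive f⁻¹ c := by
  intro p q hpq
  obtain ⟨n, hn⟩ := h p q hpq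
  exact ⟨-n, by simpa using hn⟩

lemma hp_smale_inv {f : Equiv.Perm X} (h : IsSmale f) : IsSmale f⁻¹ := by
  obtain ⟨h1, h2, ⟨c, hc, he⟩, ε₀, hε₀, h4⟩ := h
  refine ⟨h2, h1, ⟨c, hc, hp_exp_inv he⟩, ε₀, hε₀, fun ε hε hε' => ?_⟩
  obtain ⟨δ, hδ, H⟩ := h4 ε hε hε'
  refine ⟨δ, hδ, fun x y hxy => ?_⟩
  rw [dist_comm] at hxy
  have := H y x hxy
  rwa [hp_Ws_inv, ← hp_Wu_eq, inter_comm]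

lemma hp_trans_inv {f : Equiv.Perm X} (h : TopTransitive f) : TopTransitive f⁻¹ := by
  intro U V hU hV hU' hV'
  obtain ⟨n, u, hu1, hu2⟩ := h V U hV hU hV' hU'
  refine ⟨n, (f ^ (n : ℤ)) u, ?_, hu1⟩
  simpa using hu2

lemma hp_cont_zpow {f : Equiv.Perm X} (h1 : Continuous f) (h2 : Continuous f.symm) (n : ℤ) :
    Continuous ⇑(f ^ n) := by
  have key : ∀ g : Equiv.Perm X, Continuous g → ∀ n : ℕ, Continuous ⇑(g ^ n) := by
    intro g hg n
    induction n with
    | zero => simpa using continuous_id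
    | succ k ih =>
      rw [pow_succ]
      exact ih.comp hg
  obtain ⟨k, rfl | rfl⟩ := n.eq_nat_or_neg
  · simpa using key f h1 k
  · have := key f⁻¹ h2 k
    simpa using this

lemma hp_fact_inv {F : Equiv.Perm X} {f : Equiv.Perm Y} {π : X → Y} (h : IsFactorMap F f π) :
    IsFactorMap F⁻¹ f⁻¹ π := by
  refine ⟨h.1, h.2.1, fun x => ?_⟩
  have := h.2.2 (F⁻¹ x)
  have e : F (F⁻¹ x) = x := F.apply_symm_apply x
  rw [e] at this
  rw [this]
  exact (f.symm_apply_apply _).symm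

lemma hp_semi {F : Equiv.Perm X} {f : Equiv.Perm Y} {π : X → Y} (h : IsFactorMap F f π)
    (n : ℤ) (x : X) : π ((F ^ n) x) = (f ^ n) (π x) := by
  have key : ∀ (G : Equiv.Perm X) (g : Equiv.Perm Y), IsFactorMap G g π → ∀ (n : ℕ) x,
      π ((G ^ n) x) = (g ^ n) (π x) := by
    intro G g hg n
    induction n with
    | zero => simp
    | succ k ih =>
      intro x
      rw [pow_succ, pow_succ, Equiv.Perm.mul_apply, Equiv.Perm.mul_apply, ih, hg.2.2]
  obtain ⟨k, rfl | rfl⟩ := n.eq_nat_or_neg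
  · simpa using key F f h k x
  · have := key _ _ (hp_fact_inv h) k x
    simpa using this

lemma hp_Ws_stable [CompactSpace X] {f : Equiv.Perm X} (h1 : Continuous f)
    (h2 : Continuous f.symm) {c : ℝ} (he : Expansive f c) {ε : ℝ} (hε : ε ≤ c) {x y : X}
    (h : y ∈ Ws f ε x) : y ∈ stableSet f x := by
  unfold stableSet
  rw [mem_setOf_eq, tendsto_iff_ultrafilter]
  intro g hg
  obtain ⟨⟨p, q⟩, -, hpq⟩ := isCompact_univ.ultrafilter_le_nhds
    (g.map (fun n : ℕ => ((f ^ (n : ℤ)) x, (f ^ (n : ℤ)) y))) (by simp)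
  have hT : Tendsto (fun n : ℕ => ((f ^ (n : ℤ)) x, (f ^ (n : ℤ)) y)) g (𝓝 (p, q)) := hpq
  have hp : p = q := by
    by_contra hne
    obtain ⟨j, hj⟩ := he p q hne
    have hcont : Continuous (fun z : X × X => dist ((f ^ j) z.1) ((f ^ j) z.2)) :=
      ((hp_cont_zpow h1 h2 j).comp continuous_fst).dist
        ((hp_cont_zpow h1 h2 j).comp continuous_snd)
    have hlim := (hcont.tendsto (p, q)).comp hT
    have : dist ((f ^ j) p) ((f ^ j) q) ≤ c := by
      refine le_of_tendsto hlim ?_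
      have : ∀ᶠ n : ℕ in (g : Filter ℕ), j.natAbs ≤ n := hg (eventually_ge_atTop _)
      filter_upwards [this] with n hn
      obtain ⟨m, hm⟩ : ∃ m : ℕ, j + n = m := ⟨(j + n).toNat, by omega⟩
      simp only [Function.comp]
      rw [← Equiv.Perm.mul_apply, ← Equiv.Perm.mul_apply, ← zpow_add, hm]
      exact (h m).le.trans hε
    linarith
  subst hp
  have := (continuous_dist.tendsto (p, p)).comp hT
  simpa [Function.comp_def] using this

lemma hp_bracket_unique {f : Equiv.Perm X} {c : ℝ} (he : Expansive f c) {a b p q : X}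
    (hp1 : p ∈ Ws f (c/2) a) (hp2 : p ∈ Wu f (c/2) b)
    (hq1 : q ∈ Ws f (c/2) a) (hq2 : q ∈ Wu f (c/2) b) : p = q := by
  by_contra hne
  obtain ⟨j, hj⟩ := he p q hne
  obtain ⟨k, rfl | rfl⟩ := j.eq_nat_or_neg
  · have := dist_triangle_left ((f ^ (k:ℤ)) p) ((f ^ (k:ℤ)) q) ((f ^ (k:ℤ)) a)
    have := hp1 k
    have := hq1 k
    linarith
  · have := dist_triangle_left ((f ^ (-(k:ℤ))) p) ((f ^ (-(k:ℤ))) q) ((f ^ (-(k:ℤ))) b)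
    have := hp2 k
    have := hq2 k
    linarith

lemma hp_map_Ws {F : Equiv.Perm X} {f : Equiv.Perm Y} {π : X → Y} (h : IsFactorMap F f π)
    {ε ε' : ℝ} (hm : ∀ p q, dist p q < ε → dist (π p) (π q) < ε') {x y : X}
    (hy : y ∈ Ws F ε x) : π y ∈ Ws f ε' (π x) := by
  intro n
  rw [← hp_semi h, ← hp_semi h]
  exact hm _ _ (hy n)

lemma hp_map_Wu {F : Equiv.Perm X} {f : Equiv.Perm Y} {π : X → Y} (h : IsFactorMap F f π)
    {ε ε' : ℝ} (hm : ∀ p q, dist p q < ε → dist (π p) (π q) < ε') {x y : X}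
    (hy : y ∈ Wu F ε x) : π y ∈ Wu f ε' (π x) := by
  rw [hp_Wu_eq] at *
  exact hp_map_Ws (hp_fact_inv h) hm hy

lemma hp_uc [CompactSpace X] {π : X → Y} (h : Continuous π) {ε : ℝ} (hε : 0 < ε) :
    ∃ δ > 0, ∀ p q, dist p q < δ → dist (π p) (π q) < ε := by
  obtain ⟨δ, hδ, H⟩ := Metric.uniformContinuous_iff.1
    (CompactSpace.uniformContinuous_of_continuous h) ε hε
  exact ⟨δ, hδ, fun p q => @H p q⟩

lemma hp_pos [CompactSpace X] {K : Set X} (hK : IsClosed K) {g : X → ℝ} (hg : Continuous g)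
    (hp : ∀ z ∈ K, 0 < g z) : ∃ δ > 0, ∀ z ∈ K, δ ≤ g z := by
  rcases K.eq_empty_or_nonempty with rfl | hne
  · exact ⟨1, one_pos, by simp⟩
  · obtain ⟨z, hz, hm⟩ := hK.isCompact.exists_isMinOn hne hg.continuousOn
    exact ⟨g z, hp z hz, fun w hw => hm hw⟩

/-- Close points with locally stably related images are locally stably related. -/
lemma hp_T [CompactSpace X] {F : Equiv.Perm X} {f : Equiv.Perm Y} (hX : IsSmale F)
    {π : X → Y} (hπ : IsFactorMap F f π) (hu : UResolving F π)
    {c : ℝ} (hc : 0 < c) (he : Expansive f c) {ε : ℝ} (hε : 0 < ε) :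
    ∃ η > 0, ∀ p q, dist p q < η → π q ∈ Ws f (c/2) (π p) → q ∈ Ws F ε p := by
  obtain ⟨h1, h2, ⟨cX, hcX, heX⟩, ε₀, hε₀, H⟩ := hX
  obtain ⟨μ, hμ, hm⟩ := hp_uc hπ.1 (half_pos hc)
  obtain ⟨ε₁, hε₁, l1, l2, l3, l4⟩ : ∃ e > 0, e ≤ ε ∧ e ≤ cX ∧ e ≤ ε₀ ∧ e ≤ μ :=
    ⟨min (min ε cX) (min ε₀ μ), by positivity, by simp, by simp, by simp, by simp⟩
  obtain ⟨δ, hδ, H⟩ := H ε₁ hε₁ l3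
  refine ⟨δ, hδ, fun p q hpq hst => ?_⟩
  obtain ⟨z, ⟨hz1, hz2⟩, -⟩ := H p q hpq
  have hm' : ∀ p q, dist p q < ε₁ → dist (π p) (π q) < c/2 :=
    fun p q h => hm p q (h.trans_le l4)
  have e1 : π z = π q := by
    refine hp_bracket_unique he (hp_map_Ws hπ hm' hz1) (hp_map_Wu hπ hm' hz2) hst ?_
    intro n; simpa using half_pos hc
  have e2 : z = q := by
    refine hu q ?_ ?_ e1
    · rw [hp_unst_eq]
      rw [hp_Wu_eq] at hz2
      exact hp_Ws_stable h2 h1 (hp_exp_inv heX) l2 hz2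
    · simp [unstableSet]
  rw [← e2]
  exact hp_Ws_mono l1 hz1

lemma hp_sep [CompactSpace X] {F : Equiv.Perm X} {f : Equiv.Perm Y} (hX : IsSmale F)
    {π : X → Y} (hπ : IsFactorMap F f π) (hu : UResolving F π) (hs : SResolving F π)
    {c : ℝ} (hc : 0 < c) (he : Expansive f c) :
    ∃ s > 0, ∀ p q, π p = π q → dist p q < s → p = q := by
  obtain ⟨h1, h2, ⟨cX, hcX, heX⟩, -⟩ := id hX
  obtain ⟨η, hη, H⟩ := hp_T hX hπ hu hc he hcX
  refine ⟨η, hη, fun p q hpq hd => ?_⟩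
  have hq : q ∈ Ws F cX p := by
    refine H p q hd ?_
    rw [hpq]; intro n; simpa using half_pos hc
  exact hs p (by simp [stableSet]) (hp_Ws_stable h1 h2 heX le_rfl hq) hpq

lemma hp_M [CompactSpace X] {π : X → Y} (hπ : Continuous π) {s : ℝ} (hs : 0 < s)
    (sep : ∀ p q, π p = π q → dist p q < s → p = q) {η : ℝ} (hη : 0 < η) :
    ∃ δ > 0, ∀ p q, dist p q ≤ s/2 → dist (π p) (π q) < δ → dist p q < η := by
  obtain ⟨δ, hδ, H⟩ := hp_pos (K := {z : X × X | dist z.1 z.2 ≤ s/2 ∧ η ≤ dist z.1 z.2})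
    (g := fun z => dist (π z.1) (π z.2))
    ((isClosed_le continuous_dist continuous_const).inter
      (isClosed_le continuous_const continuous_dist))
    ((hπ.comp continuous_fst).dist (hπ.comp continuous_snd))
    (by
      rintro ⟨p, q⟩ ⟨ha, hb⟩
      simp only at ha hb ⊢
      rw [dist_pos]
      intro hpq
      have := sep p q hpq (by linarith)
      subst this
      simp at hb
      linarith)
  refine ⟨δ, hδ, fun p q ha hb => ?_⟩
  by_contra hcon
  have := H (p, q) ⟨ha, not_lt.1 hcon⟩
  simp only at this
  linarith

lemma hp_fin [CompactSpace X] {π : X → Y} (hπ : Continuous π) {s : ℝ} (hs : 0 < s)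
    (sep : ∀ p q, π p = π q → dist p q < s → p = q) (y : Y) : (π ⁻¹' {y}).Finite := by
  have hc : IsCompact (π ⁻¹' {y}) := (isClosed_singleton.preimage hπ).isCompact
  obtain ⟨t, ht, hfin, hcov⟩ := hc.finite_cover_balls hs
  refine hfin.subset fun x hx => ?_
  obtain ⟨z, hz, hxz⟩ := mem_iUnion₂.1 (hcov hx)
  have := sep x z ((mem_singleton_iff.1 hx).trans (mem_singleton_iff.1 (ht hz)).symm) hxz
  rwa [this]

lemma hp_B [CompactSpace X] [Nonempty Y] {π : X → Y} (hπ : Continuous π) {s : ℝ} (hs : 0 < s)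
    (sep : ∀ p q, π p = π q → dist p q < s → p = q) {η : ℝ} (hη : 0 < η) :
    ∃ y0, ∃ r > 0, ∀ x w, dist (π x) y0 < r → dist w y0 < r → ∃ v, π v = w ∧ dist x v < η := by
  wlog hle : η ≤ s generalizing η
  · obtain ⟨y0, r, hr, H⟩ := this hs le_rfl
    refine ⟨y0, r, hr, fun x w h1 h2 => ?_⟩
    obtain ⟨v, hv, hd⟩ := H x w h1 h2
    exact ⟨v, hv, by linarith⟩
  obtain ⟨y0, hy0⟩ : ∃ y0, ∀ y, (π ⁻¹' {y0}).ncard ≤ (π ⁻¹' {y}).ncard := by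
    obtain ⟨y0, h⟩ := exists_minimal_of_wellFoundedLT (fun n => ∃ y, (π ⁻¹' {y}).ncard = n)
      ⟨_, Classical.arbitrary Y, rfl⟩
    obtain ⟨y, rfl⟩ := h.1
    refine ⟨y, fun z => ?_⟩
    by_contra hcon
    exact hcon (h.2 ⟨z, rfl⟩ (by omega))
  obtain ⟨r, hr, H⟩ := hp_pos (K := {x : X | ∀ x0, π x0 = y0 → η/2 ≤ dist x x0})
    (g := fun x => dist (π x) y0)
    (by
      simp only [setOf_forall]
      exact isClosed_iInter fun x0 => isClosed_iInter fun _ =>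
        isClosed_le continuous_const (continuous_id.dist continuous_const))
    (hπ.dist continuous_const)
    (by
      intro x hx
      rw [dist_pos]
      intro h
      have := hx x h
      simp at this
      linarith)
  have H' : ∀ x, dist (π x) y0 < r → ∃ x0, π x0 = y0 ∧ dist x x0 < η/2 := by
    intro x hx
    by_contra! hcon
    have := H x hcon
    linarith
  choose! φ hφ1 hφ2 using H'
  refine ⟨y0, r, hr, fun x w hx hw => ?_⟩
  have hmaps : ∀ v ∈ π ⁻¹' {w}, φ v ∈ π ⁻¹' {y0} := by
    intro v hv
    refine hφ1 v ?_
    rw [mem_singleton_iff.1 hv]; exact hw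
  have hinj : InjOn φ (π ⁻¹' {w}) := by
    intro v hv v' hv' hh
    have e : π v = w := hv
    have e' : π v' = w := hv'
    refine sep v v' (e.trans e'.symm) ?_
    have a := hφ2 v (by rw [e]; exact hw)
    have b := hφ2 v' (by rw [e']; exact hw)
    rw [← hh] at b
    have := dist_triangle_right v v' (φ v)
    linarith
  have himg : φ '' (π ⁻¹' {w}) = π ⁻¹' {y0} := by
    refine Set.eq_of_subset_of_ncard_le (image_subset_iff.2 hmaps) ?_ (hp_fin hπ hs sep y0)
    rw [ncard_image_of_injOn hinj]
    exact hy0 w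
  have : φ x ∈ φ '' (π ⁻¹' {w}) := by rw [himg]; exact hφ1 x hx
  obtain ⟨v, hv, hvx⟩ := this
  have e : π v = w := hv
  refine ⟨v, e, ?_⟩
  have a := hφ2 v (by rw [e]; exact hw)
  have b := hφ2 x hx
  rw [hvx] at a
  have := dist_triangle_right x v (φ x)
  linarith

/-- Uniform lifting of local stable sets along orbits visiting an open set. -/
lemma hp_S [CompactSpace X] [Nonempty Y] {F : Equiv.Perm X} {f : Equiv.Perm Y} (hX : IsSmale F)
    {π : X → Y} (hπ : IsFactorMap F f π) (hu : UResolving F π) (hs : SResolving F π)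
    {c : ℝ} (hc : 0 < c) (he : Expansive f c) {ε : ℝ} (hε : 0 < ε) :
    ∃ δ > 0, ∃ O : Set Y, IsOpen O ∧ O.Nonempty ∧ ∀ x, (∃ n : ℕ, π ((F ^ (n : ℤ)) x) ∈ O) →
      ∀ w ∈ Ws f δ (π x), ∃ v ∈ Ws F ε x, π v = w := by
  obtain ⟨s, hs0, sep⟩ := hp_sep hX hπ hu hs hc he
  obtain ⟨μ, hμ, hm⟩ := hp_uc hX.2.1 (half_pos hs0)
  obtain ⟨η₁, hη₁, l1, l2⟩ : ∃ e > 0, e ≤ ε ∧ e ≤ μ :=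
    ⟨min ε μ, by positivity, by simp, by simp⟩
  obtain ⟨δ₁, hδ₁, HM⟩ := hp_M hπ.1 hs0 sep hη₁
  obtain ⟨η₀, hη₀, HT⟩ := hp_T hX hπ hu hc he hη₁
  obtain ⟨y0, r, hr, HB⟩ := hp_B hπ.1 hs0 sep hη₀
  obtain ⟨δ, hδ, m1, m2, m3⟩ : ∃ e > 0, e ≤ δ₁ ∧ e ≤ c/2 ∧ e ≤ r/2 :=
    ⟨min δ₁ (min (c/2) (r/2)), by positivity, by simp, by simp, by simp⟩
  refine ⟨δ, hδ, Metric.ball y0 (r/2), Metric.isOpen_ball,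
    ⟨y0, Metric.mem_ball_self (half_pos hr)⟩, ?_⟩
  rintro x ⟨n, hn⟩ w hw
  rw [Metric.mem_ball] at hn
  have hwn : dist ((f ^ (n:ℤ)) w) y0 < r := by
    have a := hw n
    rw [← hp_semi hπ] at a
    have := dist_triangle_left ((f ^ (n:ℤ)) w) y0 (π ((F ^ (n:ℤ)) x))
    linarith
  obtain ⟨v', hv', hd⟩ := HB ((F ^ (n:ℤ)) x) ((f ^ (n:ℤ)) w) (by linarith) hwn
  have hst : v' ∈ Ws F η₁ ((F ^ (n:ℤ)) x) := by
    refine HT _ _ hd ?_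
    intro k
    rw [hv', hp_semi hπ, ← Equiv.Perm.mul_apply, ← Equiv.Perm.mul_apply, ← zpow_add]
    exact_mod_cast (hw (k + n)).trans_le m2
  obtain ⟨v, rfl⟩ : ∃ v, v' = (F ^ (n:ℤ)) v := ⟨(F ^ (n:ℤ)).symm v', by simp⟩
  have hvw : π v = w := by
    rw [hp_semi hπ] at hv'
    exact (f ^ (n:ℤ)).injective hv'
  refine ⟨v, ?_, hvw⟩
  have down : ∀ k : ℕ, k ≤ n →
      dist ((F ^ ((n - k : ℕ) : ℤ)) x) ((F ^ ((n - k : ℕ) : ℤ)) v) < η₁ := by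
    intro k
    induction k with
    | zero => intro _; simpa using hst 0
    | succ k ih =>
      intro hk
      have ih := ih (by omega)
      have hstep : ∀ z : X, (F ^ ((n - (k+1) : ℕ) : ℤ)) z = F.symm ((F ^ ((n - k : ℕ) : ℤ)) z) := by
        intro z
        rw [Equiv.eq_symm_apply]
        have : n - k = (n - (k+1)) + 1 := by omega
        rw [this, ← Equiv.Perm.mul_apply, ← zpow_one_add]
        push_cast
        rw [add_comm]
      refine HM _ _ ?_ ?_
      · rw [hstep, hstep]
        exact (hm _ _ (ih.trans_le l2)).le
      · rw [hp_semi hπ, hp_semi hπ, hvw]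
        exact (hw _).trans_le m1
  intro j
  refine lt_of_lt_of_le ?_ l1
  rcases le_total n j with h | h
  · have := hst (j - n)
    rw [← Equiv.Perm.mul_apply, ← Equiv.Perm.mul_apply, ← zpow_add] at this
    have e : ((j - n : ℕ) : ℤ) + n = j := by omega
    rwa [e] at this
  · have := down (n - j) (by omega)
    have e : n - (n - j) = j := by omega
    rwa [e] at this

lemma hp_dense {F : Equiv.Perm X} (hF : IsSmale F) (hXt : TopTransitive F) {π : X → Y}
    (hπ : Continuous π) (hsurj : Function.Surjective π) {O : Set Y} (hO : IsOpen O)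
    (hne : O.Nonempty) :
    IsOpen {x | ∃ n : ℕ, π ((F ^ (n : ℤ)) x) ∈ O} ∧
      Dense {x | ∃ n : ℕ, π ((F ^ (n : ℤ)) x) ∈ O} := by
  constructor
  · rw [setOf_exists]
    exact isOpen_iUnion fun n => hO.preimage (hπ.comp (hp_cont_zpow hF.1 hF.2.1 n))
  · rw [dense_iff_inter_open]
    intro V hV hVne
    obtain ⟨n, v, h1, h2⟩ := hXt (π ⁻¹' O) V (hO.preimage hπ) hV (hne.preimage hsurj) hVne
    exact ⟨v, h2, n, h1⟩

lemma hp_open [CompactSpace X] [Nonempty Y] {F : Equiv.Perm X} {f : Equiv.Perm Y}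
    (hX : IsSmale F) (hXt : TopTransitive F) (hY : IsSmale f)
    {π : X → Y} (hπ : IsFactorMap F f π) (hu : UResolving F π) (hs : SResolving F π)
    {ε : ℝ} (hε : 0 < ε) :
    ∃ δ > 0, ∀ x y', dist (π x) y' < δ → ∃ x', π x' = y' ∧ dist x x' < ε := by
  obtain ⟨g1, g2, ⟨c, hc, he⟩, ε₀Y, hε₀Y, HY⟩ := id hY
  obtain ⟨h1, h2, -, ε₀, hε₀, HX⟩ := id hX
  obtain ⟨μ, hμ, hm⟩ := hp_uc hπ.1 (half_pos hc)
  obtain ⟨ε₃, hε₃, l1, l2, l3⟩ : ∃ e > 0, e ≤ ε₀ ∧ e ≤ ε/3 ∧ e ≤ μ :=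
    ⟨min ε₀ (min (ε/3) μ), by positivity, by simp, by simp, by simp⟩
  obtain ⟨δ₃, hδ₃, HX⟩ := HX ε₃ hε₃ l1
  have hm' : ∀ p q, dist p q < ε₃ → dist (π p) (π q) < c/2 :=
    fun p q h => hm p q (h.trans_le l3)
  obtain ⟨ε₄, hε₄, l4, l5⟩ : ∃ e > 0, e ≤ δ₃/2 ∧ e ≤ ε/3 :=
    ⟨min (δ₃/2) (ε/3), by positivity, by simp, by simp⟩
  obtain ⟨δs, hδs, Os, hOs, hOs', HS⟩ := hp_S hX hπ hu hs hc he hε₄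
  obtain ⟨δu, hδu, Ou, hOu, hOu', HU⟩ := hp_S (hp_smale_inv hX) (hp_fact_inv hπ)
    (fun x => by rw [hp_unst_inv]; exact hs x) (fun x => by rw [← hp_unst_eq]; exact hu x)
    hc (hp_exp_inv he) hε₄
  obtain ⟨ε₅, hε₅, m1, m2, m3, m4⟩ : ∃ e > 0, e ≤ ε₀Y ∧ e ≤ δs ∧ e ≤ δu ∧ e ≤ c/2 :=
    ⟨min (min ε₀Y δs) (min δu (c/2)), by positivity, by simp, by simp, by simp, by simp⟩
  obtain ⟨δ₅, hδ₅, HY⟩ := HY ε₅ hε₅ m1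
  obtain ⟨o1, d1⟩ := hp_dense hX hXt hπ.1 hπ.2.1 hOs hOs'
  obtain ⟨o2, d2⟩ := hp_dense (hp_smale_inv hX) (hp_trans_inv hXt) hπ.1 hπ.2.1 hOu hOu'
  have hD := d1.inter_of_isOpen_left d2 o1
  refine ⟨δ₅, hδ₅, fun x₀ y' hx₀ => ?_⟩
  have hV : IsOpen {x | dist (π x) y' < δ₅ ∧ dist x₀ x < ε/3} :=
    (isOpen_lt (hπ.1.dist continuous_const) continuous_const).inter
      (isOpen_lt (continuous_const.dist continuous_id) continuous_const)
  obtain ⟨x, ⟨hx1, hx2⟩, hxs, hxu⟩ := dense_iff_inter_open.1 hD _ hV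
    ⟨x₀, hx₀, by simpa using hε⟩
  obtain ⟨a, ⟨ha1, ha2⟩, -⟩ := HY (π x) y' hx1
  obtain ⟨b, ⟨hb1, hb2⟩, -⟩ := HY y' (π x) (by rwa [dist_comm])
  obtain ⟨a', ha', rfl⟩ := HS x hxs a (hp_Ws_mono m2 ha1)
  rw [hp_Wu_eq] at hb2
  obtain ⟨b', hb', rfl⟩ := HU x hxu b (hp_Ws_mono m3 hb2)
  have da := hp_Ws_dist ha'
  have db := hp_Ws_dist hb'
  obtain ⟨x', ⟨hx'1, hx'2⟩, -⟩ := HX b' a' (by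
    have := dist_triangle_left b' a' x
    linarith)
  refine ⟨x', ?_, ?_⟩
  · exact hp_bracket_unique he (hp_map_Ws hπ hm' hx'1) (hp_map_Wu hπ hm' hx'2)
      (hp_Ws_mono m4 (hp_Ws_symm hb1)) (hp_Wu_mono m4 (hp_Wu_symm ha2))
  · have dx := hp_Ws_dist hx'1
    have t1 := dist_triangle x₀ x x'
    have t2 := dist_triangle x b' x'
    linarith

end Helpers

/-- A u-resolving and s-resolving factor map between transitive Smale
spaces is constant-to-one. -/
theorem stmt10 {X Y : Type*} [MetricSpace X] [CompactSpace X] [MetricSpace Y] [CompactSpace Y]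
    (F : Equiv.Perm X) (f : Equiv.Perm Y)
    (hX : IsSmale F) (hXt : TopTransitive F) (hY : IsSmale f) (hYt : TopTransitive f)
    (π : X → Y) (hπ : IsFactorMap F f π)
    (hu : UResolving F π) (hs : SResolving F π) :
    ∃ k : ℕ, ∀ y : Y, (π ⁻¹' {y}).ncard = k := by
  classical
  rcases isEmpty_or_nonempty Y with hE | hE
  · exact ⟨0, fun y => (hE.false y).elim⟩
  obtain ⟨c, hc, he⟩ := hY.2.2.1
  obtain ⟨s, hs0, sep⟩ := hp_sep hX hπ hu hs hc he
  obtain ⟨δ, hδ, H⟩ := hp_open hX hXt hY hπ hu hs (half_pos hs0)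
  have hle : ∀ y y' : Y, dist y y' < δ → (π ⁻¹' {y}).ncard ≤ (π ⁻¹' {y'}).ncard := by
    intro y y' hd
    have H' : ∀ x ∈ π ⁻¹' {y}, ∃ x', π x' = y' ∧ dist x x' < s/2 := by
      intro x hx
      have e : π x = y := hx
      exact H x y' (by rwa [e])
    choose! φ hφ1 hφ2 using H'
    refine ncard_le_ncard_of_injOn φ (fun x hx => hφ1 x hx) ?_ (hp_fin hπ.1 hs0 sep y')
    intro p hp q hq hpq
    have e : π p = y := hp
    have e' : π q = y := hq
    refine sep p q (e.trans e'.symm) ?_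
    have a := hφ2 p hp
    have b := hφ2 q hq
    rw [← hpq] at b
    have := dist_triangle_right p q (φ p)
    linarith
  have heq : ∀ y y' : Y, dist y y' < δ → (π ⁻¹' {y}).ncard = (π ⁻¹' {y'}).ncard :=
    fun y y' h => le_antisymm (hle y y' h) (hle y' y (by rwa [dist_comm]))
  have hinv : ∀ (n : ℤ) (y : Y), (π ⁻¹' {(f ^ n) y}).ncard = (π ⁻¹' {y}).ncard := by
    intro n y
    have : π ⁻¹' {(f ^ n) y} = (F ^ n) '' (π ⁻¹' {y}) := by
      ext x
      constructor
      · intro hx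
        refine ⟨(F ^ n).symm x, ?_, by simp⟩
        have e : π x = (f ^ n) y := hx
        have := hp_semi hπ n ((F ^ n).symm x)
        rw [Equiv.apply_symm_apply, e] at this
        exact ((f ^ n).injective this).symm
      · rintro ⟨z, hz, rfl⟩
        have e : π z = y := hz
        simp [hp_semi hπ, e]
    rw [this, ncard_image_of_injective _ (F ^ n).injective]
  refine ⟨(π ⁻¹' {Classical.arbitrary Y}).ncard, fun y => ?_⟩
  obtain ⟨n, v, h1, h2⟩ := hYt (Metric.ball y δ) (Metric.ball (Classical.arbitrary Y) δ)
    Metric.isOpen_ball Metric.isOpen_ball ⟨y, Metric.mem_ball_self hδ⟩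
    ⟨_, Metric.mem_ball_self hδ⟩
  rw [← heq _ _ h2, ← heq _ _ h1, hinv]
end
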